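/- arXiv:1109.0439 — 6 statements merged into one kernel-verified Lean document; each statement's English description precedes it below -/
import Mathlib

section
/- Let R be a commutative ring and let T be an almost projective R-module. Then T is a direct sum of countably generated almost projective R-modules; that is, T ≅ ⊕_{j∈J} T_j where each T_j is a countably generated almost projective R-module. -/
/-!
The statement reduces to Kaplansky's theorem: a direct summand `T` of a direct sum `M = ⨁ V k` of
countably generated modules is itself a direct sum of countably generated modules. Since a
projective module is a summand of a free one, an almost projective module is a summand of a module
`F × N` with `F` free and `N` finitely generated, to which Kaplansky's theorem applies; the summands
of `T` it produces are almost projective because any summand of `T` is again a summand of `P × N`.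

For Kaplansky's theorem (`kaplansky`), let `i : T → M` and `p : M → T` with `p ∘ i = id`, and for a
set `A` of indices let `M_A = ⨆ k ∈ A, V k`. Zorn's lemma is applied to the pairs `(A, S)` where
`M_A` is stable under `i ∘ p` and `S` is an independent set of countably generated submodules of `T`
with sum `p(M_A)`. If `(A, S)` is maximal and `k ∉ A`, then `k` lies in a countable set `D` with
`M_D` stable (`exists_countable_stable`). As `M_A` is stable, `p(M_A)` is a summand of `T`: if `ρ`
projects `M` onto `M_A`, then `σ = p ∘ ρ ∘ i` projects `T` onto `p(M_A)`. So `(1 - σ)(p(M_D))` is a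
countably generated complement of `p(M_A)` in `p(M_{A ∪ D})`, and adjoining it to `S` contradicts
maximality. Hence `A` contains every index and `S` decomposes `T`.
-/

universe u v

/-- A module is countably generated if it is generated by a countable set. -/
def Module.CountablyGenerated' (R : Type u) (M : Type v) [Semiring R] [AddCommMonoid M]
    [Module R M] : Prop :=
  ∃ S : Set M, S.Countable ∧ Submodule.span R S = ⊤

/-- An `R`-module is almost projective if it is a direct summand of `P ⊕ N` for some
projective module `P` and finitely generated module `N`. -/
def Module.AlmostProjective (R : Type u) (M : Type v) [CommRing R] [AddCommGroup M]
    [Module R M] : Prop :=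
  ∃ (P : Type v) (_ : AddCommGroup P) (_ : Module R P)
    (N : Type v) (_ : AddCommGroup N) (_ : Module R N),
    Module.Projective R P ∧ Module.Finite R N ∧
      ∃ (i : M →ₗ[R] P × N) (p : (P × N) →ₗ[R] M), p.comp i = LinearMap.id

/-- An `R`-module `M` is Mittag-Leffler if for every family of `R`-modules, the canonical
map `M ⊗ ∏ᵢ Nᵢ → ∏ᵢ (M ⊗ Nᵢ)` is injective. -/
def Module.IsMittagLeffler (R : Type u) (M : Type v) [CommRing R] [AddCommGroup M]
    [Module R M] : Prop :=
  ∀ (ι : Type v) (N : ι → Type v) (_ : ∀ i, AddCommGroup (N i)) (_ : ∀ i, Module R (N i)),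
    Function.Injective
      (LinearMap.pi (fun i => LinearMap.lTensor M (LinearMap.proj i)) :
        (TensorProduct R M (∀ i, N i)) →ₗ[R] ∀ i, TensorProduct R M (N i))

/-! ### Countably generated submodules -/

/-- The submodule `N` is generated by a countable set. -/
def CountGen {R M : Type*} [Semiring R] [AddCommMonoid M] [Module R M] (N : Submodule R M) : Prop :=
  ∃ s : Set M, s.Countable ∧ Submodule.span R s = N

theorem CountGen.map {R M M' : Type*} [Semiring R] [AddCommMonoid M] [Module R M]
    [AddCommMonoid M'] [Module R M'] {N : Submodule R M} (h : CountGen N) (f : M →ₗ[R] M') :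
    CountGen (N.map f) := by
  obtain ⟨s, hs, rfl⟩ := h
  exact ⟨f '' s, hs.image f, Submodule.span_image f⟩

theorem CountGen.range {R M M' : Type*} [Semiring R] [AddCommMonoid M] [Module R M]
    [AddCommMonoid M'] [Module R M'] [Module.Finite R M] (f : M →ₗ[R] M') :
    CountGen (LinearMap.range f) := by
  obtain ⟨s, hs⟩ := Module.Finite.fg_top (R := R) (M := M)
  rw [LinearMap.range_eq_map]
  exact CountGen.map ⟨s, s.countable_toSet, hs⟩ f

theorem CountGen.biSup {R M ι : Type*} [Semiring R] [AddCommMonoid M] [Module R M]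
    {V : ι → Submodule R M} (h : ∀ k, CountGen (V k)) {C : Set ι} (hC : C.Countable) :
    CountGen (⨆ k ∈ C, V k) := by
  choose s hs hV using h
  refine ⟨⋃ k ∈ C, s k, hC.biUnion fun k _ => hs k, ?_⟩
  simp only [Submodule.span_iUnion, hV]

theorem CountGen.countablyGenerated {R : Type*} {M : Type*} [Semiring R] [AddCommMonoid M]
    [Module R M] {N : Submodule R M} (h : CountGen N) : Module.CountablyGenerated' R N := by
  obtain ⟨s, hs, rfl⟩ := h
  exact ⟨_, hs.preimage Subtype.val_injective, Submodule.span_span_coe_preimage⟩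

/-! ### Independence and complements -/

theorem sSupIndep_insert {α : Type*} [CompleteLattice α] [IsModularLattice α] {S : Set α} {K : α}
    (hS : sSupIndep S) (hK : Disjoint (sSup S) K) : sSupIndep (insert K S) := by
  intro x hx
  by_cases hxK : x = K
  · subst hxK
    refine hK.symm.mono_right (sSup_le_sSup ?_)
    rintro y ⟨hy, hyx⟩
    exact hy.resolve_left hyx
  · have hxS : x ∈ S := hx.resolve_left hxK
    have h1 : sSup (insert K S \ {x}) ≤ sSup (S \ {x}) ⊔ K := by
      refine sSup_le ?_
      rintro y ⟨rfl | hy, hyx⟩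
      · exact le_sup_right
      · exact (le_sSup (show y ∈ S \ {x} from ⟨hy, hyx⟩)).trans le_sup_left
    refine Disjoint.mono_right h1 ?_
    refine Disjoint.disjoint_sup_right_of_disjoint_sup_left (hS hxS) (hK.mono_left ?_)
    exact sup_le (le_sSup hxS) (sSup_le_sSup Set.sdiff_subset)

/-- If `σ` is a projection onto `U`, then `(1 - σ)(W)` is a complement of `U` in `U ⊔ W`. -/
theorem complement_of_projection {R T : Type*} [Ring R] [AddCommGroup T] [Module R T]
    {U : Submodule R T} (W : Submodule R T) {σ : T →ₗ[R] T} (h1 : ∀ x, σ x ∈ U)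
    (h2 : ∀ x ∈ U, σ x = x) :
    Disjoint U (W.map (LinearMap.id - σ)) ∧ U ⊔ W.map (LinearMap.id - σ) = U ⊔ W := by
  constructor
  · rw [Submodule.disjoint_def]
    rintro _ hx ⟨w, -, rfl⟩
    rw [← h2 _ hx]
    simp [h2 _ (h1 w)]
  · apply le_antisymm
    · refine sup_le le_sup_left ?_
      rintro _ ⟨w, hw, rfl⟩
      exact Submodule.sub_mem _ (Submodule.mem_sup_right hw) (Submodule.mem_sup_left (h1 w))
    · refine sup_le le_sup_left fun w hw => ?_
      rw [← add_sub_cancel (σ w) w]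
      exact Submodule.add_mem_sup (h1 w) ⟨w, hw, rfl⟩

/-! ### Kaplansky's theorem -/

section Kaplansky

variable {R M T ι : Type*} [Ring R] [AddCommGroup M] [Module R M] [AddCommGroup T] [Module R T]
  {V : ι → Submodule R M}

/-- A countably generated submodule lies in a countable subsum. -/
theorem CountGen.exists_le_biSup (htop : ⨆ k, V k = ⊤) {N : Submodule R M} (hN : CountGen N) :
    ∃ D : Set ι, D.Countable ∧ N ≤ ⨆ k ∈ D, V k := by
  obtain ⟨s, hs, rfl⟩ := hN
  have h : ∀ x : M, ∃ F : Finset ι, x ∈ ⨆ k ∈ F, V k := fun x =>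
    Submodule.mem_iSup_iff_exists_finset.1 (htop ▸ Submodule.mem_top)
  choose F hF using h
  refine ⟨⋃ x ∈ s, (F x : Set ι), hs.biUnion fun x _ => (F x).countable_toSet,
    Submodule.span_le.2 fun x hx => ?_⟩
  exact biSup_mono (f := V) (fun k hk => Set.mem_biUnion hx (Finset.mem_coe.2 hk)) (hF x)

/-- Each index lies in a countable set of indices whose subsum is stable under `e`. -/
theorem exists_countable_stable (hV : ∀ k, CountGen (V k)) (htop : ⨆ k, V k = ⊤)
    (e : M →ₗ[R] M) (k : ι) :
    ∃ D : Set ι, D.Countable ∧ k ∈ D ∧ (⨆ k ∈ D, V k).map e ≤ ⨆ k ∈ D, V k := by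
  have h : ∀ C : {C : Set ι // C.Countable}, ∃ D : {D : Set ι // D.Countable},
      (⨆ k ∈ C.1, V k).map e ≤ ⨆ k ∈ D.1, V k := fun C => by
    obtain ⟨D, hD, h⟩ := ((CountGen.biSup hV C.2).map e).exists_le_biSup htop
    exact ⟨⟨D, hD⟩, h⟩
  choose f hf using h
  let C : ℕ → {C : Set ι // C.Countable} := fun n => f^[n] ⟨{k}, Set.countable_singleton k⟩
  refine ⟨⋃ n, (C n).1, Set.countable_iUnion fun n => (C n).2,
    Set.mem_iUnion.2 ⟨0, Set.mem_singleton k⟩, ?_⟩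
  rw [iSup_iUnion, Submodule.map_iSup]
  refine iSup_le fun n => (hf (C n)).trans ?_
  have : f (C n) = C (n + 1) := (Function.iterate_succ_apply' f n _).symm
  rw [this]
  exact le_iSup (fun n => ⨆ k ∈ (C n).1, V k) (n + 1)

/-- The pairs `(A, S)` such that `⨆ k ∈ A, V k` is stable under `i ∘ p` and `S` is an independent
set of countably generated submodules whose sum is the image of `⨆ k ∈ A, V k` under `p`. -/
def partialDecomp (V : ι → Submodule R M) (i : T →ₗ[R] M) (p : M →ₗ[R] T) :
    Set (Set ι × Set (Submodule R T)) :=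
  {q | (⨆ k ∈ q.1, V k).map (i ∘ₗ p) ≤ ⨆ k ∈ q.1, V k ∧ sSupIndep q.2 ∧
    sSup q.2 = (⨆ k ∈ q.1, V k).map p ∧ ∀ K ∈ q.2, CountGen K}

/-- The union of a chain of partial decompositions is a partial decomposition. -/
theorem partialDecomp_chain (i : T →ₗ[R] M) (p : M →ₗ[R] T)
    {c : Set (Set ι × Set (Submodule R T))} (hc : c ⊆ partialDecomp V i p)
    (hchain : IsChain (· ≤ ·) c) :
    ((⋃ q : c, q.1.1, ⋃ q : c, q.1.2) : Set ι × Set (Submodule R T)) ∈ partialDecomp V i p := by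
  refine ⟨?_, ?_, ?_, ?_⟩
  · dsimp only
    rw [iSup_iUnion, Submodule.map_iSup]
    exact iSup_mono fun q : c => (hc q.2).1
  · refine sSupIndep_iUnion_of_directed ?_ fun q => (hc q.2).2.1
    rintro q r
    rcases hchain.total q.2 r.2 with h | h
    · exact ⟨r, h.2, subset_rfl⟩
    · exact ⟨q, subset_rfl, h.2⟩
  · dsimp only
    rw [iSup_iUnion, Submodule.map_iSup, sSup_iUnion]
    exact iSup_congr fun q : c => (hc q.2).2.2.1
  · intro K hK
    obtain ⟨q, hq⟩ := Set.mem_iUnion.1 hK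
    exact (hc q.2).2.2.2 K hq

/-- A partial decomposition extends to one whose index set contains a given index: a countable stable
set `D` containing `k` is adjoined to `A`, and to `S` a countably generated complement of
`p(⨆ k ∈ A, V k)` in `p(⨆ k ∈ A ∪ D, V k)`. -/
theorem partialDecomp_extend (hV : ∀ k, CountGen (V k)) (hind : iSupIndep V) (htop : ⨆ k, V k = ⊤)
    {i : T →ₗ[R] M} {p : M →ₗ[R] T} (hpi : p ∘ₗ i = LinearMap.id)
    {q : Set ι × Set (Submodule R T)} (hq : q ∈ partialDecomp V i p) (k : ι) :
    ∃ r ∈ partialDecomp V i p, q ≤ r ∧ k ∈ r.1 := by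
  obtain ⟨A, S⟩ := q
  obtain ⟨hst, hS, hsum, hcg⟩ := hq
  dsimp only at hst hS hsum hcg
  obtain ⟨D, hD, hkD, hDst⟩ := exists_countable_stable hV htop (i ∘ₗ p) k
  have hpi' : ∀ x, p (i x) = x := fun x => LinearMap.congr_fun hpi x
  have hcompl : IsCompl (⨆ k ∈ A, V k) (⨆ k ∈ Aᶜ, V k) := by
    refine ⟨hind.disjoint_biSup_biSup disjoint_compl_right, codisjoint_iff.2 ?_⟩
    rw [← iSup_union, Set.union_compl_self, iSup_univ, htop]
  let σ : T →ₗ[R] T := p ∘ₗ Submodule.projection _ _ hcompl ∘ₗ i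
  have h1 : ∀ x, σ x ∈ (⨆ k ∈ A, V k).map p := fun x =>
    Submodule.mem_map_of_mem (Submodule.projection_apply_mem hcompl (i x))
  have h2 : ∀ x ∈ (⨆ k ∈ A, V k).map p, σ x = x := by
    rintro _ ⟨m, hm, rfl⟩
    have : i (p m) ∈ ⨆ k ∈ A, V k := hst (Submodule.mem_map_of_mem hm)
    change p (Submodule.projection _ _ hcompl (i (p m))) = p m
    rw [Submodule.projection_apply_of_mem_left hcompl this, hpi']
  obtain ⟨hdisj, hsup⟩ := complement_of_projection ((⨆ k ∈ D, V k).map p) h1 h2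
  refine ⟨(A ∪ D, insert (((⨆ k ∈ D, V k).map p).map (LinearMap.id - σ)) S), ⟨?_, ?_, ?_, ?_⟩,
    ⟨Set.subset_union_left, Set.subset_insert _ _⟩, Or.inr hkD⟩
  · dsimp only
    rw [iSup_union, Submodule.map_sup]
    exact sup_le_sup hst hDst
  · exact sSupIndep_insert hS (hsum ▸ hdisj)
  · dsimp only
    rw [sSup_insert, hsum, sup_comm, hsup, iSup_union, Submodule.map_sup]
  · rintro K (rfl | hK)
    · exact ((CountGen.biSup hV hD).map p).map _
    · exact hcg K hK

/-- Kaplansky's theorem: a direct summand of a direct sum of countably generated modules is a direct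
sum of countably generated modules. -/
theorem kaplansky (hV : ∀ k, CountGen (V k)) (hind : iSupIndep V) (htop : ⨆ k, V k = ⊤)
    {i : T →ₗ[R] M} {p : M →ₗ[R] T} (hpi : p ∘ₗ i = LinearMap.id) :
    ∃ S : Set (Submodule R T), sSupIndep S ∧ sSup S = ⊤ ∧ ∀ K ∈ S, CountGen K := by
  have h0 : ((∅, ∅) : Set ι × Set (Submodule R T)) ∈ partialDecomp V i p := by
    refine ⟨?_, sSupIndep_empty, ?_, ?_⟩ <;> simp
  obtain ⟨q, -, hq⟩ := zorn_le_nonempty₀ (partialDecomp V i p)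
    (fun c hc hchain _ _ => ⟨_, partialDecomp_chain i p hc hchain, fun z hz =>
      ⟨Set.subset_iUnion (fun q : c => q.1.1) ⟨z, hz⟩,
        Set.subset_iUnion (fun q : c => q.1.2) ⟨z, hz⟩⟩⟩) _ h0
  have hall : q.1 = Set.univ := Set.eq_univ_of_forall fun k => by
    obtain ⟨r, hr, hqr, hk⟩ := partialDecomp_extend hV hind htop hpi hq.prop k
    exact (hq.le_of_ge hr hqr).1 hk
  obtain ⟨-, hS, hsum, hcg⟩ := hq.prop
  refine ⟨q.2, hS, ?_, hcg⟩
  rw [hsum, hall, iSup_univ, htop, Submodule.map_top, LinearMap.range_eq_top]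
  exact fun x => ⟨i x, LinearMap.congr_fun hpi x⟩

end Kaplansky

/-! ### The module `(X →₀ R) × N` -/

/-- A family of submodules is independent as soon as each member `V k` is fixed pointwise by a
linear map that kills all the other members. -/
theorem iSupIndep_of_projections {R M ι : Type*} [Ring R] [AddCommGroup M] [Module R M]
    {V : ι → Submodule R M} (f : ι → M →ₗ[R] M) (h1 : ∀ k, ∀ x ∈ V k, f k x = x)
    (h2 : ∀ k l, l ≠ k → ∀ x ∈ V l, f k x = 0) : iSupIndep V := by
  intro k
  rw [Submodule.disjoint_def]
  intro x hx hx'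
  have : (⨆ l, ⨆ (_ : l ≠ k), V l) ≤ LinearMap.ker (f k) :=
    iSup₂_le fun l hl y hy => h2 k l hl y hy
  rw [← h1 k x hx]
  exact this hx'

/-- The canonical decomposition of `(X →₀ R) × N`: the factor `N`, and one copy of `R` for each
element of `X`. -/
noncomputable def freeProdPart (R X N : Type*) [Ring R] [AddCommGroup N] [Module R N] :
    Option X → Submodule R ((X →₀ R) × N)
  | none => LinearMap.range (LinearMap.inr R (X →₀ R) N)
  | some x => LinearMap.range (LinearMap.inl R (X →₀ R) N ∘ₗ Finsupp.lsingle x)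

section FreeProd

variable (R X N : Type*) [Ring R] [AddCommGroup N] [Module R N]

theorem countGen_freeProdPart [Module.Finite R N] (k : Option X) :
    CountGen (freeProdPart R X N k) := by
  cases k with
  | none => exact CountGen.range _
  | some x => exact CountGen.range _

theorem iSup_freeProdPart : ⨆ k, freeProdPart R X N k = ⊤ := by
  rw [iSup_option, eq_top_iff]
  rintro ⟨f, n⟩ -
  have hf : f ∈ ⨆ x, LinearMap.range (Finsupp.lsingle x : R →ₗ[R] X →₀ R) := by
    rw [Finsupp.iSup_lsingle_range]; trivial
  have hf' : (f, (0 : N)) ∈ ⨆ x, freeProdPart R X N (some x) := by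
    have := Submodule.mem_map_of_mem (f := LinearMap.inl R (X →₀ R) N) hf
    simp only [Submodule.map_iSup, ← LinearMap.range_comp] at this
    exact this
  have : (f, n) = ((0 : X →₀ R), n) + (f, (0 : N)) := by simp
  rw [this]
  exact Submodule.add_mem_sup ⟨n, rfl⟩ hf'

theorem iSupIndep_freeProdPart : iSupIndep (freeProdPart R X N) := by
  classical
  refine iSupIndep_of_projections (fun k => match k with
    | none => LinearMap.inr R (X →₀ R) N ∘ₗ LinearMap.snd R (X →₀ R) N
    | some x => LinearMap.inl R (X →₀ R) N ∘ₗ Finsupp.lsingle x ∘ₗ Finsupp.lapply x ∘ₗ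
        LinearMap.fst R (X →₀ R) N) ?_ ?_
  · rintro (_ | x) _ ⟨y, rfl⟩ <;> simp
  · rintro (_ | x) (_ | z) h _ ⟨y, rfl⟩
    · exact absurd rfl h
    · simp
    · simp
    · have : z ≠ x := fun e => h (e ▸ rfl)
      simp [Finsupp.single_eq_of_ne this.symm]

end FreeProd

/-! ### Almost projective modules -/

/-- A direct summand of an almost projective module is almost projective. -/
theorem Module.AlmostProjective.of_isCompl {R : Type u} [CommRing R] {T : Type v} [AddCommGroup T]
    [Module R T] (hT : Module.AlmostProjective R T) {K L : Submodule R T} (h : IsCompl K L) :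
    Module.AlmostProjective R K := by
  obtain ⟨P, _, _, N, _, _, hP, hN, i, p, hpi⟩ := hT
  refine ⟨P, _, ‹_›, N, _, ‹_›, hP, hN, i ∘ₗ K.subtype, Submodule.projectionOnto K L h ∘ₗ p, ?_⟩
  ext x
  have : p (i x) = x := LinearMap.congr_fun hpi x
  simp [this]

theorem stmt0 {R : Type u} [CommRing R] {T : Type v} [AddCommGroup T] [Module R T]
    (hT : Module.AlmostProjective R T) :
    ∃ (J : Type v) (_ : DecidableEq J) (Tj : J → Submodule R T),
      DirectSum.IsInternal Tj ∧
        ∀ j, Module.CountablyGenerated' R (Tj j) ∧ Module.AlmostProjective R (Tj j) := by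
  classical
  obtain ⟨S, hS, htop, hcg⟩ :
      ∃ S : Set (Submodule R T), sSupIndep S ∧ sSup S = ⊤ ∧ ∀ K ∈ S, CountGen K := by
    obtain ⟨P, _, _, N, _, _, hP, hN, i, p, hpi⟩ := hT
    obtain ⟨s, hs⟩ := Module.projective_def'.1 hP
    -- `T` is a summand of `P × N`, hence of `(P →₀ R) × N`.
    refine kaplansky (countGen_freeProdPart R P N) (iSupIndep_freeProdPart R P N)
      (iSup_freeProdPart R P N) (i := s.prodMap LinearMap.id ∘ₗ i)
      (p := p ∘ₗ (Finsupp.linearCombination R id).prodMap LinearMap.id) ?_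
    rw [LinearMap.comp_assoc, ← LinearMap.comp_assoc i, LinearMap.prodMap_comp, hs,
      LinearMap.id_comp, LinearMap.prodMap_id, LinearMap.id_comp, hpi]
  refine ⟨S, inferInstance, Subtype.val, ?_, fun j => ⟨(hcg j.1 j.2).countablyGenerated, ?_⟩⟩
  · rw [DirectSum.isInternal_submodule_iff_iSupIndep_and_iSup_eq_top, ← sSupIndep_iff,
      ← sSup_eq_iSup']
    exact ⟨hS, htop⟩
  · refine hT.of_isCompl (L := sSup (S \ {j.1})) ⟨hS j.2, codisjoint_iff.2 ?_⟩
    rw [← sSup_insert, Set.insert_sdiff_singleton, Set.insert_eq_of_mem j.2, htop]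
end

section
/- Let R → S be a faithfully flat homomorphism of commutative rings and let M be an R-module. If S ⊗_R M is a projective S-module, then M is a projective R-module. -/
/-!
The proof follows the Raynaud–Gruson strategy: countably generated modules are handled by a
Mittag-Leffler argument, and the general case is reduced to them by a Kaplansky dévissage.

*Countably generated case.* Let `C` be an `R`-module with `S ⊗ C` projective. By descent `C` is
flat. A finite family `x` in `C` can be written `x i = ∑ j, a i j • y j` so that the coefficients
`a i j`, seen in `S`, are values of `S`-linear forms on `S ⊗ C` at `1 ⊗ x i` (`exists_factor`): one
uses the dual basis expansion of `1 ⊗ x i` and the equational criterion of flatness. Consequently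
the kernel of the corresponding map `g : Rⁿ → Rᵐ` is that of `f : Rⁿ → C`, and, whenever
`Rᵐ → C` factors through `k : Rᵐ → Rᵖ`, the map `g` factors through `k ∘ g`: this holds over `S`,
and solvability of linear systems descends (`exists_descent`, `exists_stable`). Iterating over a
countable generating family presents `C` as a union of images of finite free modules along a
Mittag-Leffler sequence, and a section of a free cover of `C` is then built recursively
(`projective_of_sequence`, `projective_of_countable`).

*Dévissage.* A splitting `σ` of the free cover of `S ⊗ M` with basis indexed by `M` singles out
the submodules `N` of `M` for which `σ (1 ⊗ x)` is supported in `N` for all `x ∈ N`. They are stable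
under unions of chains, can be enlarged by countably many generators to contain any given element,
and for `N ≤ N'` of this kind `S ⊗ (N' / N)` is projective. Zorn's lemma applied to sections of
`(M →₀ R) → M` defined on such submodules yields a maximal one; if its domain `N` were proper, it
would extend to some `N'` with `N' / N` countably generated, since `N' / N` is projective by the
first case.
-/

universe u v w

open TensorProduct

/-- If `S ⊗ C` is projective, the free cover of `S ⊗ C` with basis the elements `1 ⊗ c` splits. -/
theorem exists_splitting {R : Type*} {S : Type*} [CommRing R] [CommRing S] [Algebra R S]
    {C : Type*} [AddCommGroup C] [Module R C] (h : Module.Projective S (S ⊗[R] C)) :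
    ∃ σ : S ⊗[R] C →ₗ[S] (C →₀ S),
      ∀ z, Finsupp.linearCombination S (fun c : C => (1 : S) ⊗ₜ[R] c) (σ z) = z := by
  have hsurj : Function.Surjective
      (Finsupp.linearCombination S (fun c : C => (1 : S) ⊗ₜ[R] c)) := by
    intro z
    induction z with
    | zero => exact ⟨0, map_zero _⟩
    | tmul s c => exact ⟨Finsupp.single c s, by simp [smul_tmul']⟩
    | add x y hx hy =>
      obtain ⟨a, rfl⟩ := hx
      obtain ⟨b, rfl⟩ := hy
      exact ⟨a + b, map_add _ _ _⟩
  obtain ⟨σ, hσ⟩ := Module.projective_lifting_property _ LinearMap.id hsurj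
  exact ⟨σ, fun z => LinearMap.congr_fun hσ z⟩

/-- Any finite family in `C` is a combination of a finite family `y` with coefficients that become,
in `S`, values of linear forms on `S ⊗ C`. The dual basis expansion of the `1 ⊗ x i` is a relation
in `Sⁿ ⊗ C`, which vanishes trivially because `C` is flat. -/
theorem exists_factor {R : Type*} {S : Type*} [CommRing R] [CommRing S] [Algebra R S]
    {C : Type*} [AddCommGroup C] [Module R C] [Module.Flat R C]
    (h : Module.Projective S (S ⊗[R] C)) {n : ℕ} (x : Fin n → C) :
    ∃ (m : ℕ) (y : Fin m → C) (a : Fin n → Fin m → R) (Λ : Fin m → S ⊗[R] C →ₗ[S] S),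
      (∀ i, x i = ∑ j, a i j • y j) ∧ ∀ i j, algebraMap R S (a i j) = Λ j (1 ⊗ₜ x i) := by
  classical
  obtain ⟨σ, hσ⟩ := exists_splitting h
  let T : Finset C := Finset.univ.biUnion fun i => (σ (1 ⊗ₜ x i)).support
  have hx (i : Fin n) : (1 : S) ⊗ₜ[R] x i = ∑ c : T, σ (1 ⊗ₜ x i) c ⊗ₜ[R] (c : C) := by
    conv_lhs => rw [← hσ (1 ⊗ₜ x i), Finsupp.linearCombination_apply]
    rw [Finsupp.sum_of_support_subset (s := T), ← Finset.sum_coe_sort]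
    · simp [smul_tmul']
    · exact Finset.subset_biUnion_of_mem (fun i => (σ (1 ⊗ₜ x i)).support) (Finset.mem_univ i)
    · simp
  -- The relation `∑ i, e i ⊗ x i - ∑ c, (σ (1 ⊗ x i) c)_i ⊗ c = 0` in `Sⁿ ⊗ C`.
  let μ : Fin n ⊕ T → (Fin n → S) :=
    Sum.elim (fun i => Pi.single i 1) (fun c i => - σ (1 ⊗ₜ x i) c)
  let ν : Fin n ⊕ T → C := Sum.elim x (fun c => c)
  have hsum : ∑ k, μ k ⊗ₜ[R] ν k = 0 := by
    have hμ (c : T) : (fun i => σ (1 ⊗ₜ x i) c) =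
        ∑ i, (Pi.single i (σ (1 ⊗ₜ x i) c) : Fin n → S) :=
      (Finset.univ_sum_single _).symm
    have h1 (i : Fin n) := congrArg (LinearMap.rTensor C (LinearMap.single R (fun _ => S) i)) (hx i)
    simp only [map_sum, LinearMap.rTensor_tmul, LinearMap.coe_single] at h1
    have h2 (c : T) : (fun i => - σ (1 ⊗ₜ x i) c) ⊗ₜ[R] (c : C) =
        - ∑ i, (Pi.single i (σ (1 ⊗ₜ x i) c) : Fin n → S) ⊗ₜ[R] (c : C) := by
      rw [← sum_tmul, ← hμ, ← neg_tmul]; rfl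
    simp only [Fintype.sum_sum_type, μ, ν, Sum.elim_inl, Sum.elim_inr, h2, h1,
      Finset.sum_neg_distrib]
    rw [Finset.sum_comm, add_neg_cancel]
  obtain ⟨m, a, y, hy, ha⟩ :=
    vanishesTrivially_of_sum_tmul_eq_zero_of_rTensor_injective R
      (Module.Flat.rTensor_preserves_injective_linearMap _ (Submodule.injective_subtype _)) hsum
  refine ⟨m, y, fun i => a (.inl i),
    fun j => ∑ c : T, algebraMap R S (a (.inr c) j) • (Finsupp.lapply (c : C) ∘ₗ σ),
    fun i => hy (.inl i), fun i j => ?_⟩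
  have := congrFun (ha j) i
  simp [Fintype.sum_sum_type, μ, Pi.single_apply, Algebra.smul_def] at this
  simp only [LinearMap.sum_apply, LinearMap.smul_apply, LinearMap.comp_apply, Finsupp.lapply_apply,
    smul_eq_mul]
  rw [Finset.univ_eq_attach]
  exact add_neg_eq_zero.mp this

/-- If `v` lies in the `S`-span of finitely many vectors with entries in `R`, it lies in their
`R`-span: faithful flatness applied to the quotient of `R^ι` by that span. -/
theorem exists_descent {R : Type*} {S : Type*} [CommRing R] [CommRing S] [Algebra R S]
    [Module.FaithfullyFlat R S] {ι κ : Type*} [Finite ι] [Fintype κ] (v : ι → R) (w : κ → ι → R)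
    (s : κ → S) (h : ∀ i, algebraMap R S (v i) = ∑ k, s k * algebraMap R S (w k i)) :
    ∃ l : κ → R, ∀ i, v i = ∑ k, l k * w k i := by
  classical
  have := Fintype.ofFinite ι
  have h1 : (1 : S) ⊗ₜ[R] v = ∑ k, s k ⊗ₜ[R] w k := by
    apply (TensorProduct.piScalarRight R S S ι).injective
    ext i
    simp [h, Algebra.smul_def, mul_comm]
  have h2 := congrArg
    (LinearMap.lTensor S (Submodule.span R (Set.range w)).mkQ) h1
  have h3 (k : κ) : (Submodule.span R (Set.range w)).mkQ (w k) = 0 := by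
    simpa using Submodule.subset_span (Set.mem_range_self k)
  simp only [map_sum, LinearMap.lTensor_tmul, h3, tmul_zero, Finset.sum_const_zero] at h2
  rw [Module.FaithfullyFlat.one_tmul_eq_zero_iff] at h2
  have h4 : v ∈ Submodule.span R (Set.range w) := by simpa using h2
  obtain ⟨l, hl⟩ := (Submodule.mem_span_range_iff_exists_fun R).1 h4
  exact ⟨l, fun i => by simp [← hl]⟩

/-- The Mittag-Leffler property: a map `f : Rⁿ → C` factors as `f' ∘ g` through a finite free
module, where `f'` reaches a prescribed element `c`, the map `g` kills the kernel of `f`, and `g`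
factors through `k ∘ g` whenever `f'` factors through `k`. -/
theorem exists_stable {R : Type*} (S : Type*) [CommRing R] [CommRing S] [Algebra R S]
    [Module.FaithfullyFlat R S] {C : Type*} [AddCommGroup C] [Module R C]
    (h : Module.Projective S (S ⊗[R] C)) {n : ℕ} (f : (Fin n → R) →ₗ[R] C) (c : C) :
    ∃ (m : ℕ) (g : (Fin n → R) →ₗ[R] (Fin m → R)) (f' : (Fin m → R) →ₗ[R] C),
      f' ∘ₗ g = f ∧ c ∈ LinearMap.range f' ∧ LinearMap.ker f ≤ LinearMap.ker g ∧
      ∀ (p : ℕ) (k : (Fin m → R) →ₗ[R] (Fin p → R)) (f'' : (Fin p → R) →ₗ[R] C),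
        f'' ∘ₗ k = f' → ∃ l : (Fin p → R) →ₗ[R] (Fin m → R), l ∘ₗ k ∘ₗ g = g := by
  have : Module.Flat R C := Module.Flat.of_flat_tensorProduct R C S
  obtain ⟨m, y, a, Λ, hxy, hΛ⟩ :=
    exists_factor h (Fin.snoc (α := fun _ => C) (fun i => f (Pi.single i 1)) c : Fin (n + 1) → C)
  have hf (i : Fin n) : f (Pi.single i 1) = ∑ j, a i.castSucc j • y j := by
    simpa using hxy i.castSucc
  let g : (Fin n → R) →ₗ[R] (Fin m → R) := Fintype.linearCombination R (fun i j => a i.castSucc j)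
  have hg1 (i : Fin n) : g (Pi.single i 1) = a i.castSucc := by
    ext j; simp [g, Fintype.linearCombination_apply_single]
  have hg2 (x : Fin n → R) (j : Fin m) : algebraMap R S (g x j) = Λ j (1 ⊗ₜ f x) := by
    have : Algebra.linearMap R S ∘ₗ LinearMap.proj j ∘ₗ g =
        (Λ j).restrictScalars R ∘ₗ TensorProduct.mk R S C 1 ∘ₗ f := by
      ext i
      have := hΛ i.castSucc j
      simp only [Fin.snoc_castSucc] at this
      simp [hg1, this]
    exact LinearMap.congr_fun this x
  have hinj : Function.Injective (algebraMap R S) := FaithfulSMul.algebraMap_injective R S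
  refine ⟨m, g, Fintype.linearCombination R y, ?_, ?_, ?_, ?_⟩
  · ext i
    simp [hg1, hf, Fintype.linearCombination_apply]
  · exact ⟨a (Fin.last n), by simpa [Fintype.linearCombination_apply] using (hxy (Fin.last n)).symm⟩
  · intro x hx
    ext j
    apply hinj
    rw [hg2, hx]
    simp
  · intro p k f'' hk
    have hf'' (x : Fin n → R) : f x = f'' (k (g x)) := by
      rw [← LinearMap.comp_apply f'' k, hk]
      have : Fintype.linearCombination R y ∘ₗ g = f := by
        ext i
        simp [hg1, hf, Fintype.linearCombination_apply]
      rw [← this]; rfl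
    have hl (j : Fin m) : ∃ l : Fin p → R, ∀ i : Fin n,
        a i.castSucc j = ∑ q, l q * k (g (Pi.single i 1)) q := by
      apply exists_descent (S := S) (fun i : Fin n => a i.castSucc j)
        (fun q i => k (g (Pi.single i 1)) q) (fun q => Λ j (1 ⊗ₜ f'' (Pi.single q 1)))
      intro i
      have := hg2 (Pi.single i 1) j
      rw [hg1] at this
      rw [this, hf'']
      conv_lhs => rw [pi_eq_sum_univ' (k (g (Pi.single i 1)))]
      simp only [map_sum, map_smul, tmul_sum, tmul_smul]
      refine Finset.sum_congr rfl fun q _ => ?_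
      rw [← algebraMap_smul S, map_smul, smul_eq_mul, mul_comm]
    choose l hl using hl
    refine ⟨LinearMap.pi fun j => Fintype.linearCombination R (l j), ?_⟩
    ext i j
    simp [hg1, hl, Fintype.linearCombination_apply, mul_comm]

/-- A module exhausted by a sequence of projective modules satisfying the Mittag-Leffler condition
`hL` is projective. Compatible lifts `u i : A i → (C →₀ R)` of the `F i` are defined recursively, and
their graphs glue to the graph of a section of the free cover of `C`. -/
theorem projective_of_sequence {R : Type*} [CommRing R] {C : Type*} [AddCommGroup C] [Module R C]
    (A : ℕ → Type*) [∀ i, AddCommGroup (A i)] [∀ i, Module R (A i)] [∀ i, Module.Projective R (A i)]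
    (F : ∀ i, A i →ₗ[R] C) (G : ∀ i, A i →ₗ[R] A (i + 1)) (L : ∀ i, A (i + 2) →ₗ[R] A (i + 1))
    (hFG : ∀ i, F (i + 1) ∘ₗ G i = F i) (hL : ∀ i, L i ∘ₗ G (i + 1) ∘ₗ G i = G i)
    (hker : ∀ i, LinearMap.ker (F i) ≤ LinearMap.ker (G i))
    (hF : ⨆ i, LinearMap.range (F i) = ⊤) : Module.Projective R C := by
  let π : (C →₀ R) →ₗ[R] C := Finsupp.linearCombination R id
  have hπ : Function.Surjective π :=
    Finsupp.linearCombination_surjective R Function.surjective_id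
  choose t ht using fun i => Module.projective_lifting_property π (F i) hπ
  -- Each new lift is a fixed lift `t (i + 2)`, corrected through `L i` by a map into `ker π`
  -- so that it agrees with the previous lift on the image of `A i`.
  let V : ∀ i, {v : A (i + 1) →ₗ[R] (C →₀ R) // π ∘ₗ v = F (i + 1)} := fun i =>
    Nat.rec ⟨t 1, ht 1⟩ (fun i v => ⟨t (i + 2) + (v.1 - t (i + 2) ∘ₗ G (i + 1)) ∘ₗ L i, by
      rw [LinearMap.comp_add, ← LinearMap.comp_assoc, LinearMap.comp_sub, v.2,
        ← LinearMap.comp_assoc, ht, hFG, sub_self, LinearMap.zero_comp, add_zero]⟩) i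
  have hV (i : ℕ) : (V (i + 1)).1 =
    t (i + 2) + ((V i).1 - t (i + 2) ∘ₗ G (i + 1)) ∘ₗ L i := rfl
  let u (i : ℕ) : A i →ₗ[R] (C →₀ R) := (V i).1 ∘ₗ G i
  have hπu (i : ℕ) : π ∘ₗ u i = F i := by
    rw [← LinearMap.comp_assoc, (V i).2, hFG]
  have huG (i : ℕ) : u (i + 1) ∘ₗ G i = u i := by
    ext x
    have := LinearMap.congr_fun (hL i) x
    simp only [LinearMap.comp_apply] at this
    simp [u, hV, this]
  have hmono : Monotone fun i => LinearMap.range ((F i).prod (u i)) := by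
    refine monotone_nat_of_le_succ fun i => ?_
    rw [← hFG i, ← huG i, ← LinearMap.prod_comp]
    exact LinearMap.range_comp_le_range _ _
  let Γ : Submodule R (C × (C →₀ R)) := ⨆ i, LinearMap.range ((F i).prod (u i))
  have hΓ (z : C × (C →₀ R)) (hz : z ∈ Γ) : ∃ i x, F i x = z.1 ∧ u i x = z.2 := by
    obtain ⟨i, x, rfl⟩ := (Submodule.mem_iSup_of_directed _ hmono.directed_le).1 hz
    exact ⟨i, x, rfl, rfl⟩
  let p : Γ →ₗ[R] C := LinearMap.fst R C (C →₀ R) ∘ₗ Γ.subtype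
  have hp : Function.Bijective p := by
    constructor
    · rw [injective_iff_map_eq_zero]
      rintro ⟨z, hz⟩ hz0
      obtain ⟨i, x, h1, h2⟩ := hΓ z hz
      have hx : F i x = 0 := h1.trans hz0
      have hux : u i x = 0 := by simp [u, LinearMap.mem_ker.1 (hker i hx)]
      exact Subtype.ext (Prod.ext hz0 (h2.symm.trans hux))
    · rw [← LinearMap.range_eq_top, ← top_le_iff, ← hF, iSup_le_iff]
      rintro i _ ⟨x, rfl⟩
      exact ⟨⟨(F i x, u i x), Submodule.mem_iSup_of_mem i ⟨x, rfl⟩⟩, rfl⟩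
  let e := LinearEquiv.ofBijective p hp
  refine Module.projective_def'.2
    ⟨LinearMap.snd R C (C →₀ R) ∘ₗ Γ.subtype ∘ₗ e.symm.toLinearMap, ?_⟩
  ext c
  obtain ⟨i, x, h1, h2⟩ := hΓ (e.symm c) (e.symm c).2
  have h3 : (e.symm c : C × (C →₀ R)).1 = c := e.apply_symm_apply c
  change π (e.symm c : C × (C →₀ R)).2 = c
  rw [← h2, ← LinearMap.comp_apply, hπu, h1, h3]

theorem projective_of_countable {R : Type*} (S : Type*) [CommRing R] [CommRing S] [Algebra R S]
    [Module.FaithfullyFlat R S] {C : Type*} [AddCommGroup C] [Module R C]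
    (h : Module.Projective S (S ⊗[R] C)) (c : ℕ → C) (hc : Submodule.span R (Set.range c) = ⊤) :
    Module.Projective R C := by
  choose m g f hfg hcf hker hl using
    fun (n : ℕ) (f : (Fin n → R) →ₗ[R] C) (c : C) => exists_stable S h f c
  let st : ℕ → Σ n : ℕ, (Fin n → R) →ₗ[R] C := fun i =>
    Nat.rec ⟨0, 0⟩ (fun i s => ⟨m s.1 s.2 (c i), f s.1 s.2 (c i)⟩) i
  let G (i : ℕ) : (Fin (st i).1 → R) →ₗ[R] (Fin (st (i + 1)).1 → R) := g _ (st i).2 (c i)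
  have hFG (i : ℕ) : (st (i + 1)).2 ∘ₗ G i = (st i).2 := hfg _ _ _
  choose L hL using fun i => hl _ (st i).2 (c i) _ (G (i + 1)) (st (i + 2)).2 (hFG (i + 1))
  refine projective_of_sequence (fun i => Fin (st i).1 → R) (fun i => (st i).2) G L hFG hL
    (fun i => hker _ _ _) ?_
  rw [← top_le_iff, ← hc, Submodule.span_le]
  rintro _ ⟨i, rfl⟩
  exact Submodule.mem_iSup_of_mem (i + 1) (hcf _ (st i).2 (c i))

/-- A submodule `N` of `M` is closed for `σ` if, for every `x ∈ N`, only elements of `N` occur in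
the expansion of `1 ⊗ x` given by `σ`. When `σ` splits the free cover of `S ⊗ M`, this makes
`S ⊗ N` a direct summand compatible with the basis indexed by `M`. -/
def SuppClosed {R S M : Type*} [CommRing R] [CommRing S] [Algebra R S] [AddCommGroup M] [Module R M]
    (σ : S ⊗[R] M →ₗ[S] (M →₀ S)) (N : Submodule R M) : Prop :=
  ∀ x ∈ N, σ (1 ⊗ₜ x) ∈ Finsupp.supported S S (N : Set M)

section

variable {R S M : Type*} [CommRing R] [CommRing S] [Algebra R S] [AddCommGroup M] [Module R M]
  {σ : S ⊗[R] M →ₗ[S] (M →₀ S)}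

theorem mkQ_submoduleOf_eq_zero_iff {N N' : Submodule R M} (x : N') :
    (N.submoduleOf N').mkQ x = 0 ↔ (x : M) ∈ N :=
  Submodule.Quotient.mk_eq_zero _

/-- For closed `N` and `N'`, the module `S ⊗ (N' / (N ∩ N'))` is a retract of the free module on
the complement of `N`. -/
theorem SuppClosed.projective_quotient [Module.Flat R S]
    (hσ : ∀ z, Finsupp.linearCombination S (fun c : M => (1 : S) ⊗ₜ[R] c) (σ z) = z)
    {N N' : Submodule R M} (hN : SuppClosed σ N) (hN' : SuppClosed σ N') :
    Module.Projective S (S ⊗[R] (N' ⧸ N.submoduleOf N')) := by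
  classical
  let q : N' →ₗ[R] N' ⧸ N.submoduleOf N' := (N.submoduleOf N').mkQ
  have hq (x : N') (hx : (x : M) ∈ N) : q x = 0 := by
    exact (mkQ_submoduleOf_eq_zero_iff x).2 hx
  let τ : M →ₗ[R] (M →₀ S) := σ.restrictScalars R ∘ₗ TensorProduct.mk R S M 1
  let ρ : (M →₀ S) →ₗ[S] (((N : Set M)ᶜ : Set M) →₀ S) :=
    Finsupp.lsubtypeDomain ((N : Set M)ᶜ)
  let a : S ⊗[R] (N' ⧸ N.submoduleOf N') →ₗ[S] (((N : Set M)ᶜ : Set M) →₀ S) :=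
    LinearMap.liftBaseChange S
      ((N.submoduleOf N').liftQ (ρ.restrictScalars R ∘ₗ τ ∘ₗ N'.subtype) (by
        intro x hx
        have := hN _ (show (x : M) ∈ N from hx)
        rw [LinearMap.mem_ker]
        rw [Finsupp.mem_supported'] at this
        ext j
        exact this j j.2))
  let γ : M → S ⊗[R] N' := fun j => if h : j ∈ N' then 1 ⊗ₜ ⟨j, h⟩ else 0
  let b : (((N : Set M)ᶜ : Set M) →₀ S) →ₗ[S] S ⊗[R] (N' ⧸ N.submoduleOf N') :=
    Finsupp.linearCombination S fun j => q.baseChange S (γ j)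
  have hγN (j : M) (hj : j ∈ N) : q.baseChange S (γ j) = 0 := by
    by_cases h : j ∈ N'
    · simp [γ, h, hq ⟨j, h⟩ hj]
    · simp [γ, h]
  refine Module.Projective.of_split a b ?_
  ext x
  have hx := hN' _ x.2
  have h1 : Finsupp.linearCombination S γ (σ (1 ⊗ₜ (x : M))) = 1 ⊗ₜ x := by
    apply Module.Flat.lTensor_preserves_injective_linearMap (M := S) N'.subtype N'.subtype_injective
    have : (N'.subtype.baseChange S) (Finsupp.linearCombination S γ (σ (1 ⊗ₜ (x : M)))) =
        1 ⊗ₜ (x : M) := by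
      conv_rhs => rw [← hσ (1 ⊗ₜ (x : M))]
      rw [Finsupp.apply_linearCombination]
      simp only [Finsupp.linearCombination_apply]
      refine Finsupp.sum_congr fun j hj => ?_
      have hj' : j ∈ N' := (Finsupp.mem_supported _ _).1 hx hj
      simp [γ, hj']
    exact this
  have h2 : b (ρ (σ (1 ⊗ₜ (x : M)))) =
      q.baseChange S (Finsupp.linearCombination S γ (σ (1 ⊗ₜ (x : M)))) := by
    generalize σ (1 ⊗ₜ (x : M)) = f
    rw [← LinearMap.comp_apply, ← LinearMap.comp_apply]
    congr 1
    ext j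
    by_cases hj : j ∈ N
    · have : ρ (Finsupp.single j 1) = 0 := by
        ext k
        have : j ≠ k := fun h => k.2 (h ▸ hj)
        change (Finsupp.single j 1 : M →₀ S) k = 0
        simp [this]
      simp [this, hγN j hj]
    · have : ρ (Finsupp.single j 1) = Finsupp.single ⟨j, hj⟩ 1 := by
        ext k
        change (Finsupp.single j 1 : M →₀ S) k = _
        simp [Finsupp.single_apply, Subtype.ext_iff]
      simp [this, b]
  have h3 : a (1 ⊗ₜ q x) = ρ (σ (1 ⊗ₜ (x : M))) := by
    simp [a, q, τ]
  change b (a (1 ⊗ₜ q x)) = 1 ⊗ₜ q x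
  rw [h3, h2, h1]
  simp

/-- Iterating the support of `σ (1 ⊗ x)` from `m` adds finitely many elements for each `x`. -/
theorem exists_countable_closed (σ : S ⊗[R] M →ₗ[S] (M →₀ S)) (m : M) :
    ∃ X : Set M, X.Countable ∧ m ∈ X ∧ ∀ x ∈ X, σ (1 ⊗ₜ x) ∈ Finsupp.supported S S X := by
  let Y : ℕ → Set M := fun n =>
    Nat.rec {m} (fun _ Z => ⋃ x ∈ Z, ((σ (1 ⊗ₜ x)).support : Set M)) n
  have hY (n : ℕ) : Y (n + 1) = ⋃ x ∈ Y n, ((σ (1 ⊗ₜ x)).support : Set M) := rfl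
  refine ⟨⋃ n, Y n, Set.countable_iUnion fun n => ?_, Set.mem_iUnion.2 ⟨0, rfl⟩, ?_⟩
  · induction n with
    | zero => exact Set.countable_singleton m
    | succ n ih => exact hY n ▸ ih.biUnion fun x _ => (Finset.finite_toSet _).countable
  · intro x hx
    obtain ⟨n, hn⟩ := Set.mem_iUnion.1 hx
    rw [Finsupp.mem_supported]
    refine Set.Subset.trans ?_ (Set.subset_iUnion Y (n + 1))
    rw [hY]
    exact Set.subset_biUnion_of_mem (u := fun x => ((σ (1 ⊗ₜ x)).support : Set M)) hn

theorem SuppClosed.sup_span {N : Submodule R M} (hN : SuppClosed σ N) {X : Set M}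
    (hX : ∀ x ∈ X, σ (1 ⊗ₜ x) ∈ Finsupp.supported S S X) :
    SuppClosed σ (N ⊔ Submodule.span R X) := by
  let τ : M →ₗ[R] (M →₀ S) := σ.restrictScalars R ∘ₗ TensorProduct.mk R S M 1
  suffices N ⊔ Submodule.span R X ≤ ((Finsupp.supported S S
      ((N ⊔ Submodule.span R X : Submodule R M) : Set M)).restrictScalars R).comap τ from this
  refine sup_le (fun x hx => ?_) (Submodule.span_le.2 fun x hx => ?_)
  · exact Finsupp.supported_mono (SetLike.coe_subset_coe.2 le_sup_left) (hN x hx)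
  · exact Finsupp.supported_mono (Submodule.subset_span.trans
      (SetLike.coe_subset_coe.2 le_sup_right)) (hX x hx)

/-- A partial section of `π` extends from its domain to `N'` when the quotient of `N'` by the
domain is projective, because the domain then has a complement in `N'` that is projective. -/
theorem exists_extension {P : Type*} [AddCommGroup P] [Module R P] {π : P →ₗ[R] M}
    (hπ : Function.Surjective π) (f : M →ₗ.[R] P) (hf : ∀ x, π (f x) = x) (N' : Submodule R M)
    (hle : f.domain ≤ N') [Module.Projective R (N' ⧸ f.domain.submoduleOf N')] :
    ∃ f' : M →ₗ.[R] P, f'.domain = N' ∧ f ≤ f' ∧ ∀ x, π (f' x) = x := by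
  let q : N' →ₗ[R] N' ⧸ f.domain.submoduleOf N' := (f.domain.submoduleOf N').mkQ
  obtain ⟨t, ht⟩ := Module.projective_lifting_property q LinearMap.id (Submodule.mkQ_surjective _)
  obtain ⟨u, hu⟩ := Module.projective_lifting_property π (N'.subtype ∘ₗ t) hπ
  have ht' (z) : q (t z) = z := LinearMap.congr_fun ht z
  have hu' (z) : π (u z) = t z := LinearMap.congr_fun hu z
  let d : N' →ₗ[R] f.domain := (N'.subtype - N'.subtype ∘ₗ t ∘ₗ q).codRestrict f.domain (by
    intro x
    have : q (x - t (q x)) = 0 := by simp [ht']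
    exact (mkQ_submoduleOf_eq_zero_iff _).1 this)
  have hd (x : N') : (d x : M) = x - t (q x) := rfl
  refine ⟨⟨N', f.toFun ∘ₗ d + u ∘ₗ q⟩, rfl, ⟨hle, ?_⟩, ?_⟩
  · intro x y hxy
    have hy : q y = 0 := (mkQ_submoduleOf_eq_zero_iff y).2 (hxy ▸ x.2)
    have hdy : d y = x := Subtype.ext (by simp [hd, hy, hxy])
    change f x = f (d y) + u (q y)
    simp [hdy, hy]
  · intro x
    change π (f (d x) + u (q x)) = x
    simp [hf, hd, hu']

end

/-- Faithfully flat descent of projectivity: if `R → S` is faithfully flat and `S ⊗[R] M`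
is a projective `S`-module, then `M` is a projective `R`-module. -/
theorem stmt5 {R : Type u} {S : Type v} [CommRing R] [CommRing S] [Algebra R S]
    [Module.FaithfullyFlat R S] {M : Type w} [AddCommGroup M] [Module R M]
    (h : Module.Projective S (TensorProduct R S M)) :
    Module.Projective R M := by
  obtain ⟨σ, hσ⟩ := exists_splitting h
  let π : (M →₀ R) →ₗ[R] M := Finsupp.linearCombination R id
  have hπ : Function.Surjective π :=
    Finsupp.linearCombination_surjective R Function.surjective_id
  obtain ⟨f, hf⟩ := zorn_le₀
    {f : M →ₗ.[R] (M →₀ R) | SuppClosed σ f.domain ∧ ∀ x, π (f x) = x} (by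
    intro c hc hchain
    rcases c.eq_empty_or_nonempty with rfl | hne
    · refine ⟨⊥, ⟨?_, ?_⟩, by simp⟩
      · intro x hx
        obtain rfl : x = 0 := hx
        simp
      · intro x
        have hx : x = 0 := Subtype.ext x.2
        simp [hx]
    · have hdir := hchain.directedOn
      refine ⟨LinearPMap.sSup c hdir, ⟨?_, ?_⟩, fun g hg => LinearPMap.le_sSup hdir hg⟩
      · intro x hx
        obtain ⟨g, hg, hxg⟩ := (LinearPMap.mem_domain_sSup_iff hne hdir).1 hx
        exact Finsupp.supported_mono (LinearPMap.le_sSup hdir hg).1 ((hc hg).1 x hxg)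
      · rintro ⟨x, hx⟩
        obtain ⟨g, hg, hxg⟩ := (LinearPMap.mem_domain_sSup_iff hne hdir).1 hx
        exact (congrArg π (LinearPMap.sSup_apply hdir hg ⟨x, hxg⟩)).trans ((hc hg).2 ⟨x, hxg⟩))
  obtain ⟨hcl, hfπ⟩ := hf.prop
  have htop : f.domain = ⊤ := by
    rw [eq_top_iff]
    intro m _
    obtain ⟨X, hXc, hmX, hX⟩ := exists_countable_closed σ m
    have hcl' := hcl.sup_span hX
    set N' := f.domain ⊔ Submodule.span R X with hN'
    have hXN' : X ⊆ N' := Submodule.subset_span.trans (SetLike.coe_subset_coe.2 le_sup_right)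
    let q : N' →ₗ[R] N' ⧸ f.domain.submoduleOf N' := (f.domain.submoduleOf N').mkQ
    obtain ⟨e, he⟩ := hXc.exists_eq_range ⟨m, hmX⟩
    have heN' (i : ℕ) : e i ∈ N' := hXN' (he ▸ Set.mem_range_self i)
    have hspan : Submodule.span R (Set.range fun i => q ⟨e i, heN' i⟩) = ⊤ := by
      have hle : N' ≤ ((Submodule.span R (Set.range fun i => q ⟨e i, heN' i⟩)).comap q).map
          N'.subtype := by
        refine sup_le (fun x hx => ?_) (Submodule.span_le.2 ?_)
        · have hx' : x ∈ N' := le_sup_left (a := f.domain) hx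
          refine ⟨⟨x, hx'⟩, ?_, rfl⟩
          have h0 : q ⟨x, hx'⟩ = 0 := (mkQ_submoduleOf_eq_zero_iff _).2 hx
          simp [h0]
        · rw [he]
          rintro _ ⟨i, rfl⟩
          exact ⟨⟨e i, heN' i⟩, Submodule.subset_span ⟨i, rfl⟩, rfl⟩
      rw [← top_le_iff]
      rintro z -
      obtain ⟨x, rfl⟩ := Submodule.mkQ_surjective _ z
      obtain ⟨x', hx', hxx'⟩ := hle x.2
      obtain rfl : x' = x := Subtype.ext hxx'
      exact hx'
    have := projective_of_countable S (hcl.projective_quotient hσ hcl') _ hspan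
    obtain ⟨f', hdom, hle, hf'⟩ := exists_extension hπ f hfπ N' le_sup_left
    have := hf.2 ⟨hdom ▸ hcl', hf'⟩ hle
    exact this.1 (hdom ▸ hXN' hmX)
  refine Module.projective_def'.2
    ⟨f.toFun ∘ₗ (LinearMap.id.codRestrict f.domain fun x => htop ▸ Submodule.mem_top), ?_⟩
  ext x
  exact hfπ ⟨x, _⟩
end

section
/- Let R → S be a faithfully flat homomorphism of commutative rings and let M be an R-module. If S ⊗_R M is a flat Mittag-Leffler S-module, then M is a flat Mittag-Leffler R-module. -/
/-!
Flatness descends along `R → S` by Mathlib's `Module.Flat.of_flat_tensorProduct`. Once `M` is known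
to be flat, so that `M ⊗_R -` preserves injections, the Mittag-Leffler property follows from one
commutative square.

For a family `N i` of `R`-modules, each `N i → S ⊗_R N i` is injective since `S` is faithfully flat
over `R`; hence so is `∏ N i → ∏ (S ⊗_R N i)`, and so is its tensor product with `M`. Its target
is `M ⊗_R ∏ (S ⊗_R N i) = (S ⊗_R M) ⊗_S ∏ (S ⊗_R N i)`, which embeds into
`∏ (S ⊗_R M) ⊗_S (S ⊗_R N i)` because `S ⊗_R M` is Mittag-Leffler over `S`. The composite factors
through `M ⊗_R ∏ N i → ∏ (M ⊗_R N i)`, which is therefore injective. The map `S ⊗_R ∏ N i →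
∏ (S ⊗_R N i)`, which need not be injective, plays no role.
-/

universe u v w

open TensorProduct in
/-- Let `φ : N → Q` be an injective `R`-linear map into an `S`-module `Q`. If `M` is flat over `R`,
then the map `M ⊗_R N → M ⊗_R Q = (S ⊗_R M) ⊗_S Q` induced by `φ` is injective. -/
theorem exists_injective_baseChange_tensor {R S M N Q : Type*} [CommRing R] [CommRing S]
    [Algebra R S] [AddCommGroup M] [Module R M] [Module.Flat R M] [AddCommGroup N] [Module R N]
    [AddCommGroup Q] [Module R Q] [Module S Q] [IsScalarTower R S Q]
    (φ : N →ₗ[R] Q) (hφ : Function.Injective φ) :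
    ∃ ψ : M ⊗[R] N →+ (S ⊗[R] M) ⊗[S] Q, Function.Injective ψ ∧
      ∀ m n, ψ (m ⊗ₜ n) = ((1 : S) ⊗ₜ[R] m) ⊗ₜ[S] φ n := by
  let e : Q ⊗[R] M ≃ₗ[S] (S ⊗[R] M) ⊗[S] Q :=
    (AlgebraTensorModule.cancelBaseChange R S S Q M).symm ≪≫ₗ TensorProduct.comm S Q (S ⊗[R] M)
  refine ⟨e.toLinearMap.toAddMonoidHom.comp
    ((TensorProduct.comm R M Q).toLinearMap ∘ₗ φ.lTensor M).toAddMonoidHom, ?_, fun m n => rfl⟩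
  exact e.injective.comp ((TensorProduct.comm R M Q).injective.comp
    (Module.Flat.lTensor_preserves_injective_linearMap φ hφ))

/-- Faithfully flat descent of the flat Mittag-Leffler property. -/
theorem stmt6 {R : Type u} {S : Type v} [CommRing R] [CommRing S] [Algebra R S]
    [Module.FaithfullyFlat R S] {M : Type w} [AddCommGroup M] [Module R M]
    (hflat : Module.Flat S (TensorProduct R S M))
    (hML : Module.IsMittagLeffler S (TensorProduct R S M)) :
    Module.Flat R M ∧ Module.IsMittagLeffler R M := by
  have hM : Module.Flat R M := Module.Flat.of_flat_tensorProduct R M S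
  refine ⟨hM, fun ι N _ _ => ?_⟩
  -- The hypothesis over `S` concerns families living in the universe of `S ⊗ M`, hence the `ULift`.
  let N' : ULift.{max v w} ι → Type (max v w) := fun i => TensorProduct R S (N i.down)
  let η : ∀ i, N i →ₗ[R] TensorProduct R S (N i) := fun i => TensorProduct.mk R S (N i) 1
  have hη : ∀ i, Function.Injective (η i) := fun i =>
    Module.FaithfullyFlat.tensorProduct_mk_injective (N i)
  let φ : (∀ i, N i) →ₗ[R] ∀ i, N' i :=
    LinearMap.pi fun i => η i.down ∘ₗ LinearMap.proj i.down
  have hφ : Function.Injective φ := fun x y hxy =>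
    funext fun i => hη i (congrFun hxy ⟨i⟩)
  obtain ⟨Ψ, hΨ, hΨt⟩ := exists_injective_baseChange_tensor (S := S) (M := M) φ hφ
  choose ψ _ hψt using fun i => exists_injective_baseChange_tensor (S := S) (M := M) (η i) (hη i)
  have hcomm : ∀ (i : ULift.{max v w} ι) (z : TensorProduct R M (∀ i, N i)),
      LinearMap.lTensor (TensorProduct R S M) (LinearMap.proj (R := S) (φ := N') i) (Ψ z) =
        ψ i.down (LinearMap.lTensor M (LinearMap.proj (R := R) (φ := N) i.down) z) := by
    intro i z
    induction z with
    | zero => simp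
    | tmul m n => rw [hΨt, LinearMap.lTensor_tmul, LinearMap.lTensor_tmul, hψt]; rfl
    | add x y hx hy => simp only [map_add, hx, hy]
  intro x y hxy
  apply hΨ
  apply hML (ULift.{max v w} ι) N' inferInstance inferInstance
  funext i
  have h := congrFun hxy i.down
  simp only [LinearMap.pi_apply] at h ⊢
  rw [hcomm, hcomm, h]
end

section
/- Let R be a commutative ring, let f_1, …, f_m ∈ R be elements generating the unit ideal, and let M be an R-module. If for each j the localization M_{f_j} is a projective R_{f_j}-module, then M is a projective R-module. -/
/-!
Only the case of modules that are not finitely generated is delicate: a map out of `M_f` need not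
become, after multiplication by a power of `f`, the localization of a map out of `M`, so the local
splittings of `R^(M) → M` cannot be glued directly. The argument follows Kaplansky and
Raynaud–Gruson.

*Dévissage.* Projectivity of `M_f` amounts to an `R`-linear map `s : M → R_f^(M)` lifting
`M → M_f` along `R_f^(M) → M_f` (`IsAwaySection`). Call a submodule `N` adapted to `s` if `s`
sends `N` into the span of the basis vectors indexed by elements of `N`. Adapted submodules are
stable under directed unions, and the section descends to quotients of adapted submodules
(`IsAwaySection.exists_quotient`), which are therefore again locally projective. Closing one
element under the supports of finitely many sections needs only countably many elements. So a
submodule `N` adapted to all `s j` can be enlarged to an adapted `N'` containing a given element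
with `N' / N` countably generated and locally projective. If `N' / N` is projective, a partial
section of `R^(M) → M` over `N` extends to `N'` (`exists_extend_section`), and Zorn's lemma gives
a section over `M`.

*Countably generated case.* Let `C` be countably generated with every `C_{f_j}` projective; then
`C` is flat. The key is a Mittag-Leffler property (`exists_dominating`): every `h : R^n → C`
factors as `v ∘ u` with `u : R^n → R^k` factoring through the first map of every other
factorization of `h` through a finite free module. For a single `f` this holds up to powers of `f`
thanks to the section over `R_f` and the equational criterion of flatness, and the `f j`
generate the unit ideal. Iterating presents `C` as the colimit of a sequence
`F₀ → F₁ → ⋯` of finite free modules in which each `F_n → F_{n+1}` factors through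
`F_n → F_{n+2}`; this allows lifts of the `F_n → C` along `R^(C) → C` to be corrected step by step
to a compatible family (`projective_of_countable`).
-/

universe u v

section

open Finsupp

/-! ### Sections over a localization -/

/-- The canonical `R_f`-linear map `R_f^(C) → C_f` sending the basis vector of `c` to `c / 1`. -/
noncomputable def awayCover {R : Type u} [CommRing R] (f : R) (C : Type v) [AddCommGroup C]
    [Module R C] : (C →₀ Localization.Away f) →ₗ[Localization.Away f]
      LocalizedModule (Submonoid.powers f) C :=
  linearCombination (Localization.Away f) (LocalizedModule.mkLinearMap (Submonoid.powers f) C)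

/-- `s` is an `f`-local section of the free cover of `C`: an `R`-linear map lifting `C → C_f` along
`R_f^(C) → C_f`. By base change this is the same as an `R_f`-linear section of `awayCover f C`, but
it is stated on `C` so that it interacts with `R`-submodules of `C`. -/
def IsAwaySection {R : Type u} [CommRing R] (f : R) {C : Type v} [AddCommGroup C]
    [Module R C] (s : C →ₗ[R] (C →₀ Localization.Away f)) : Prop :=
  ∀ x, awayCover f C (s x) = LocalizedModule.mkLinearMap (Submonoid.powers f) C x

variable {R : Type u} [CommRing R]

/-- A projective `C_f` yields a section of the cover `R_f^(C) → C_f`, recorded on `C`. -/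
lemma exists_isAwaySection (f : R) (C : Type v) [AddCommGroup C] [Module R C]
    [Module.Projective (Localization.Away f) (LocalizedModule (Submonoid.powers f) C)] :
    ∃ s : C →ₗ[R] (C →₀ Localization.Away f), IsAwaySection f s := by
  have hsurj : Function.Surjective (awayCover f C) := by
    intro y
    induction y using LocalizedModule.induction_on with
    | h m t =>
      refine ⟨single m (Localization.mk 1 t), ?_⟩
      simp [awayCover, LocalizedModule.mk_smul_mk]
  obtain ⟨g, hg⟩ := Module.projective_lifting_property (awayCover f C) LinearMap.id hsurj
  exact ⟨g.restrictScalars R ∘ₗ LocalizedModule.mkLinearMap (Submonoid.powers f) C,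
    fun x => LinearMap.congr_fun hg _⟩

lemma IsAwaySection.projective {f : R} {C : Type v} [AddCommGroup C] [Module R C]
    {s : C →ₗ[R] (C →₀ Localization.Away f)} (hs : IsAwaySection f s) :
    Module.Projective (Localization.Away f) (LocalizedModule (Submonoid.powers f) C) := by
  have hb := IsLocalizedModule.isBaseChange (Submonoid.powers f) (Localization.Away f)
    (LocalizedModule.mkLinearMap (Submonoid.powers f) C)
  refine Module.Projective.of_split (hb.lift s) (awayCover f C) ?_
  refine hb.algHom_ext _ _ fun x => ?_
  simp only [LinearMap.comp_apply, hb.lift_eq, hs x, LinearMap.id_apply]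

/-! ### The Mittag-Leffler property -/

/-- The Mittag-Leffler property for one `f`: any factorization of `v ∘ u` through a finite free
module can be refined, by composing `u` with some `a`, so that up to a power of `f` it factors
through the first map of every other such factorization. The reason is that the section expresses
`f ^ K • v (u x)` as a combination of finitely many elements of `C`; flatness makes `a` respect this
relation, while its coefficients, being values of linear forms `C → R_f`, can be computed from
`u' x` alone. -/
lemma IsAwaySection.exists_refine {f : R} {C : Type v} [AddCommGroup C] [Module R C]
    [Module.Flat R C]
    {s : C →ₗ[R] (C →₀ Localization.Away f)} (hs : IsAwaySection f s)
    {n : ℕ} {G : Type*} [AddCommGroup G] [Module R G] [Module.Free R G] [Module.Finite R G]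
    (u : (Fin n →₀ R) →ₗ[R] G) (v : G →ₗ[R] C) :
    ∃ (k : ℕ) (a : G →ₗ[R] (Fin k →₀ R)) (v' : (Fin k →₀ R) →ₗ[R] C), v' ∘ₗ a = v ∧
      ∀ (l : ℕ) (u' : (Fin n →₀ R) →ₗ[R] (Fin l →₀ R)) (w : (Fin l →₀ R) →ₗ[R] C),
        w ∘ₗ u' = v ∘ₗ u → ∃ (N : ℕ) (ψ : (Fin l →₀ R) →ₗ[R] (Fin k →₀ R)), ψ ∘ₗ u' = f ^ N • (a ∘ₗ u) := by
  classical
  let i : (C →₀ R) →ₗ[R] (C →₀ Localization.Away f) :=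
    mapRange.linearMap (Algebra.linearMap R (Localization.Away f))
  have hi (z : C →₀ R) : awayCover f C (i z) =
      LocalizedModule.mkLinearMap (Submonoid.powers f) C (linearCombination R id z) := by
    induction z using Finsupp.induction_linear with
    | zero => simp
    | add x y hx hy => simp only [map_add, hx, hy]
    | single c r => simp [i, awayCover]
  have hloc : IsLocalizedModule (Submonoid.powers f) i := by
    dsimp only [i]; infer_instance
  have lift (l : ℕ) (g : (Fin l →₀ R) →ₗ[R] (C →₀ Localization.Away f)) :
      ∃ (N : ℕ) (g' : (Fin l →₀ R) →ₗ[R] (C →₀ R)), i ∘ₗ g' = f ^ N • g := by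
    obtain ⟨g', ⟨_, N, rfl⟩, h⟩ :=
      Module.FinitePresentation.exists_lift_of_isLocalizedModule (Submonoid.powers f) i g
    exact ⟨N, g', h⟩
  obtain ⟨N₀, A₀, hA₀⟩ := lift n (s ∘ₗ v ∘ₗ u)
  -- after multiplying by a further power of `f`, the dual basis identity holds in `C` itself
  obtain ⟨M, hM⟩ : ∃ M : ℕ, f ^ M • (linearCombination R id ∘ₗ A₀) =
      f ^ M • (f ^ N₀ • (v ∘ₗ u)) := by
    obtain ⟨⟨_, M, rfl⟩, h⟩ := Module.Finite.exists_smul_of_comp_eq_of_isLocalizedModule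
      (Submonoid.powers f) (LocalizedModule.mkLinearMap (Submonoid.powers f) C)
      (linearCombination R id ∘ₗ A₀) (f ^ N₀ • (v ∘ₗ u)) (by
        refine LinearMap.ext fun x => ?_
        have h1 := LinearMap.congr_fun hA₀ x
        simp only [LinearMap.comp_apply, LinearMap.smul_apply] at h1 ⊢
        rw [← hi, h1, LinearMap.map_smul_of_tower, hs, map_smul])
    exact ⟨M, h⟩
  obtain ⟨K, A, hA, hAc⟩ : ∃ (K : ℕ) (A : (Fin n →₀ R) →ₗ[R] (C →₀ R)),
      i ∘ₗ A = f ^ K • (s ∘ₗ v ∘ₗ u) ∧ linearCombination R id ∘ₗ A = f ^ K • (v ∘ₗ u) := by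
    refine ⟨M + N₀, f ^ M • A₀, ?_, ?_⟩
    · rw [LinearMap.comp_smul, hA₀, smul_smul, pow_add]
    · rw [LinearMap.comp_smul, hM, smul_smul, pow_add]
  obtain ⟨J, hJ⟩ : ∃ J : Finset C, ∀ x, A x ∈ supported R R (J : Set C) := by
    obtain ⟨σ, hσ⟩ := Module.Finite.fg_top (R := R) (M := Fin n →₀ R)
    refine ⟨σ.biUnion fun x => (A x).support, fun x => ?_⟩
    have : Submodule.span R (σ : Set (Fin n →₀ R)) ≤ (supported R R
        ((σ.biUnion fun x => (A x).support : Finset C) : Set C)).comap A := by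
      rw [Submodule.span_le]
      intro y hy
      simp only [Submodule.comap_coe, Set.mem_preimage, SetLike.mem_coe, mem_supported]
      exact_mod_cast Finset.subset_biUnion_of_mem (fun x => (A x).support) hy
    rw [hσ] at this
    exact this trivial
  let ρ : (C →₀ R) →ₗ[R] (J →₀ R) := lsubtypeDomain (J : Set C)
  let ι : (J →₀ R) →ₗ[R] (C →₀ R) := lmapDomain R R Subtype.val
  have hιρ : ι ∘ₗ ρ ∘ₗ A = A := by
    refine LinearMap.ext fun x => Finsupp.ext fun c => ?_
    have := hJ x
    by_cases hc : c ∈ J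
    · have := mapDomain_apply (Subtype.val_injective (p := fun c => c ∈ J)) (ρ (A x)) ⟨c, hc⟩
      exact this
    · have h1 : A x c = 0 := by
        by_contra h
        exact hc (this (Finsupp.mem_support_iff.2 h))
      rw [h1]
      exact mapDomain_of_notMem_range (ρ (A x)) c (by simpa using hc)
  -- flatness realizes `f ^ K • v (u x) = ∑ c ∈ J, (A x) c • c` as a relation in a finite free module
  obtain ⟨k, a, v', hav, ha⟩ := Module.Flat.exists_factorization_of_comp_eq_zero_of_free
    (f := (f ^ K • u).prod (-(ρ ∘ₗ A))) (x := v.coprod (linearCombination R id ∘ₗ ι)) (by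
      refine LinearMap.ext fun x => ?_
      have h1 := LinearMap.congr_fun hAc x
      have h2 := LinearMap.congr_fun hιρ x
      simp only [LinearMap.comp_apply, LinearMap.smul_apply] at h1 h2
      simp [h1, h2])
  have ha' : f ^ K • (a ∘ₗ LinearMap.inl R G (J →₀ R) ∘ₗ u) =
      a ∘ₗ LinearMap.inr R G (J →₀ R) ∘ₗ ρ ∘ₗ A := by
    refine LinearMap.ext fun x => ?_
    have h1 := LinearMap.congr_fun ha x
    have h2 : ((f ^ K • u).prod (-(ρ ∘ₗ A))) x =
      f ^ K • LinearMap.inl R G (J →₀ R) (u x) - LinearMap.inr R G (J →₀ R) (ρ (A x)) := by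
      simp
    rw [LinearMap.comp_apply, h2, map_sub, map_smul, LinearMap.zero_apply, sub_eq_zero] at h1
    exact h1
  refine ⟨k, a ∘ₗ LinearMap.inl R G (J →₀ R), v', ?_, fun l u' w hw => ?_⟩
  · rw [← LinearMap.comp_assoc, ← hav, LinearMap.coprod_inl]
  -- the coordinates of `s ∘ w`, cleared of denominators, recover `A` from `u'`
  obtain ⟨T, W, hW⟩ := lift l (s ∘ₗ w)
  obtain ⟨⟨_, S, rfl⟩, hS⟩ := Module.Finite.exists_smul_of_comp_eq_of_isLocalizedModule
      (Submonoid.powers f) i (f ^ K • (W ∘ₗ u')) (f ^ T • A) (by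
        rw [LinearMap.comp_smul, LinearMap.comp_smul, hA, ← LinearMap.comp_assoc, hW,
          LinearMap.smul_comp, LinearMap.comp_assoc, hw, smul_comm])
  refine ⟨S + T + K, f ^ S • f ^ K • (a ∘ₗ LinearMap.inr R G (J →₀ R) ∘ₗ ρ ∘ₗ W), ?_⟩
  rw [LinearMap.comp_assoc, pow_add, mul_smul, ha']
  refine LinearMap.ext fun x => ?_
  have h1 := LinearMap.congr_fun hS x
  change f ^ S • (f ^ K • W (u' x)) = f ^ S • (f ^ T • A x) at h1
  change f ^ S • f ^ K • a (LinearMap.inr R G (J →₀ R) (ρ (W (u' x)))) =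
    f ^ (S + T) • a (LinearMap.inr R G (J →₀ R) (ρ (A x)))
  have h2 := congrArg (fun z => a (LinearMap.inr R G (J →₀ R) (ρ z))) h1
  simp only [map_smul] at h2
  rw [h2, pow_add, mul_smul]

/-- The Mittag-Leffler property of a flat locally projective module, with the additional freedom of
prescribing an element `c` in the range of the second map. -/
lemma exists_dominating {m : ℕ} {f : Fin m → R} (hf : Ideal.span (Set.range f) = ⊤)
    {C : Type v} [AddCommGroup C] [Module R C] [Module.Flat R C]
    {s : ∀ j, C →ₗ[R] (C →₀ Localization.Away (f j))} (hs : ∀ j, IsAwaySection (f j) (s j))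
    {n : ℕ} (h : (Fin n →₀ R) →ₗ[R] C) (c : C) :
    ∃ (k : ℕ) (u : (Fin n →₀ R) →ₗ[R] (Fin k →₀ R)) (v : (Fin k →₀ R) →ₗ[R] C),
      v ∘ₗ u = h ∧ c ∈ LinearMap.range v ∧
      ∀ (l : ℕ) (u' : (Fin n →₀ R) →ₗ[R] (Fin l →₀ R)) (w : (Fin l →₀ R) →ₗ[R] C),
        w ∘ₗ u' = h → ∃ ψ : (Fin l →₀ R) →ₗ[R] (Fin k →₀ R), ψ ∘ₗ u' = u := by
  classical
  have key (S : Finset (Fin m)) :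
      ∃ (k : ℕ) (u : (Fin n →₀ R) →ₗ[R] (Fin k →₀ R)) (v : (Fin k →₀ R) →ₗ[R] C),
      v ∘ₗ u = h ∧ c ∈ LinearMap.range v ∧ ∀ j ∈ S,
      ∀ (l : ℕ) (u' : (Fin n →₀ R) →ₗ[R] (Fin l →₀ R)) (w : (Fin l →₀ R) →ₗ[R] C),
        w ∘ₗ u' = h → ∃ (N : ℕ) (ψ : (Fin l →₀ R) →ₗ[R] (Fin k →₀ R)),
          ψ ∘ₗ u' = f j ^ N • u := by
    induction S using Finset.induction_on with
    | empty =>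
      let e := ((Module.Free.chooseBasis R ((Fin n →₀ R) × R)).reindex (Fintype.equivFin _)).repr
      refine ⟨_, e.toLinearMap ∘ₗ LinearMap.inl R _ R,
        (h.coprod (LinearMap.toSpanSingleton R C c)) ∘ₗ e.symm.toLinearMap, ?_, ⟨e (0, 1), ?_⟩, ?_⟩
      · ext; simp
      · simp
      · simp
    | insert j S hj ih =>
      obtain ⟨k, u, v, huv, ⟨y, hy⟩, hS⟩ := ih
      obtain ⟨k', a, v', hav, ha⟩ := (hs j).exists_refine u v
      refine ⟨k', a ∘ₗ u, v', ?_, ⟨a y, ?_⟩, fun i hi l u' w hw => ?_⟩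
      · rw [← LinearMap.comp_assoc, hav, huv]
      · rw [← hy, ← hav, LinearMap.comp_apply]
      · rcases Finset.mem_insert.1 hi with rfl | hi
        · exact ha l u' w (hw.trans huv.symm)
        · obtain ⟨N, ψ, h⟩ := hS i hi l u' w hw
          exact ⟨N, a ∘ₗ ψ, by rw [LinearMap.comp_assoc, h, LinearMap.comp_smul]⟩
  obtain ⟨k, u, v, huv, hc, H⟩ := key Finset.univ
  refine ⟨k, u, v, huv, hc, fun l u' w hw => ?_⟩
  -- the scalars `r` for which `r • u` factors through `u'` form an ideal
  -- containing a power of every `f j`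
  let I : Ideal R := (LinearMap.range (LinearMap.lcomp R (Fin k →₀ R) u')).comap
    (LinearMap.toSpanSingleton R _ u)
  have hI : I.radical = ⊤ := by
    rw [← top_le_iff, ← hf, Ideal.span_le]
    rintro _ ⟨j, rfl⟩
    obtain ⟨N, ψ, h⟩ := H j (Finset.mem_univ j) l u' w hw
    exact ⟨N, ψ, h⟩
  rw [Ideal.radical_eq_top, Ideal.eq_top_iff_one] at hI
  obtain ⟨ψ, hψ⟩ := hI
  exact ⟨ψ, hψ.trans (one_smul R u)⟩

/-! ### Countably generated modules -/

/-- A countably generated flat module with the Mittag-Leffler property `hD` is projective. -/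
lemma projective_of_countable_s8 {C : Type v} [AddCommGroup C] [Module R C] [Module.Flat R C]
    (hD : ∀ (n : ℕ) (h : (Fin n →₀ R) →ₗ[R] C) (c : C),
      ∃ (k : ℕ) (u : (Fin n →₀ R) →ₗ[R] (Fin k →₀ R)) (v : (Fin k →₀ R) →ₗ[R] C),
      v ∘ₗ u = h ∧ c ∈ LinearMap.range v ∧
      ∀ (l : ℕ) (u' : (Fin n →₀ R) →ₗ[R] (Fin l →₀ R)) (w : (Fin l →₀ R) →ₗ[R] C),
        w ∘ₗ u' = h → ∃ ψ : (Fin l →₀ R) →ₗ[R] (Fin k →₀ R), ψ ∘ₗ u' = u)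
    (c : ℕ → C) (hc : Submodule.span R (Set.range c) = ⊤) : Module.Projective R C := by
  -- iterating `hD` gives a sequence of finite free modules whose colimit will be `C`
  choose K U V hUV hcV hdom using hD
  let St : ℕ → Σ k : ℕ, ((Fin k →₀ R) →ₗ[R] C) := fun n => Nat.rec ⟨0, 0⟩
    (fun n p => ⟨K p.1 p.2 (c n), V p.1 p.2 (c n)⟩) n
  obtain ⟨k, h, φ, hφ, hch, hφd⟩ : ∃ (k : ℕ → ℕ) (h : ∀ n, (Fin (k n) →₀ R) →ₗ[R] C)
      (φ : ∀ n, (Fin (k n) →₀ R) →ₗ[R] (Fin (k (n + 1)) →₀ R)),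
      (∀ n, h (n + 1) ∘ₗ φ n = h n) ∧ (∀ n, c n ∈ LinearMap.range (h (n + 1))) ∧
      ∀ (n l : ℕ) (u' : (Fin (k n) →₀ R) →ₗ[R] (Fin l →₀ R)) (w : (Fin l →₀ R) →ₗ[R] C),
        w ∘ₗ u' = h n → ∃ ψ : (Fin l →₀ R) →ₗ[R] (Fin (k (n + 1)) →₀ R), ψ ∘ₗ u' = φ n :=
    ⟨fun n => (St n).1, fun n => (St n).2, fun n => U _ (St n).2 (c n),
      fun n => hUV _ _ _, fun n => hcV _ _ _, fun n => hdom _ _ _⟩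
  -- by flatness some factorization of `h n` kills `x`, and `φ n` factors through it
  have hker (n : ℕ) (x) (hx : h n x = 0) : φ n x = 0 := by
    obtain ⟨l, a, y, hy, ha⟩ := Module.Flat.exists_factorization_of_apply_eq_zero_of_free hx
    obtain ⟨ψ, hψ⟩ := hφd n l a y hy.symm
    rw [← hψ, LinearMap.comp_apply, ha, map_zero]
  let p : (C →₀ R) →ₗ[R] C := linearCombination R id
  have hp : Function.Surjective p := linearCombination_id_surjective R C
  have step (n : ℕ) (σ : {σ : (Fin (k (n + 1)) →₀ R) →ₗ[R] (C →₀ R) // p ∘ₗ σ = h (n + 1)}) :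
      ∃ σ' : {σ : (Fin (k (n + 2)) →₀ R) →ₗ[R] (C →₀ R) // p ∘ₗ σ = h (n + 2)},
        σ'.1 ∘ₗ φ (n + 1) ∘ₗ φ n = σ.1 ∘ₗ φ n := by
    obtain ⟨σ, hσ⟩ := σ
    -- an arbitrary lift `τ` of `h (n + 2)` is corrected by the discrepancy `σ - τ ∘ φ (n + 1)`,
    -- transported along a map `ψ` factoring `φ n` through `φ (n + 1) ∘ φ n`
    obtain ⟨τ, hτ⟩ := Module.projective_lifting_property p (h (n + 2)) hp
    obtain ⟨ψ, hψ⟩ := hφd n _ (φ (n + 1) ∘ₗ φ n) (h (n + 2)) (by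
      rw [← LinearMap.comp_assoc, hφ, hφ])
    have hd : p ∘ₗ (σ - τ ∘ₗ φ (n + 1)) = 0 := by
      rw [LinearMap.comp_sub, ← LinearMap.comp_assoc, hτ, hφ, hσ, sub_self]
    refine ⟨⟨τ + (σ - τ ∘ₗ φ (n + 1)) ∘ₗ ψ, ?_⟩, ?_⟩
    · rw [LinearMap.comp_add, ← LinearMap.comp_assoc, hd, hτ, LinearMap.zero_comp, add_zero]
    · change (τ + (σ - τ ∘ₗ φ (n + 1)) ∘ₗ ψ) ∘ₗ φ (n + 1) ∘ₗ φ n = σ ∘ₗ φ n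
      rw [LinearMap.add_comp, LinearMap.comp_assoc _ ψ, hψ, LinearMap.sub_comp,
        LinearMap.comp_assoc]
      abel
  choose nxt hnxt using step
  obtain ⟨σ₀, hσ₀⟩ := Module.projective_lifting_property p (h 1) hp
  let σ : ∀ n, {σ : (Fin (k (n + 1)) →₀ R) →ₗ[R] (C →₀ R) // p ∘ₗ σ = h (n + 1)} :=
    fun n => Nat.rec ⟨σ₀, hσ₀⟩ (fun n x => nxt n x) n
  obtain ⟨s, hs⟩ : ∃ s : ∀ n, (Fin (k n) →₀ R) →ₗ[R] (C →₀ R),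
      ∀ n, s n = (σ n).1 ∘ₗ φ n := ⟨_, fun n => rfl⟩
  have hs1 (n : ℕ) : s (n + 1) ∘ₗ φ n = s n := by
    rw [hs, hs, LinearMap.comp_assoc]
    exact hnxt n (σ n)
  have hps (n : ℕ) : p ∘ₗ s n = h n := by
    rw [hs, ← LinearMap.comp_assoc, (σ n).2, hφ]
  -- the union of the graphs of the `s n` is the graph of a section of `p`
  let Γ : ℕ → Submodule R (C × (C →₀ R)) := fun n => LinearMap.range ((h n).prod (s n))
  have hΓ : Monotone Γ := monotone_nat_of_le_succ fun n => by
    rintro _ ⟨y, rfl⟩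
    refine ⟨φ n y, ?_⟩
    rw [← hφ n, ← hs1 n]
    rfl
  have hmem {z} : z ∈ (⨆ n, Γ n) ↔ ∃ n, z ∈ Γ n :=
    Submodule.mem_iSup_of_directed _ hΓ.directed_le
  let π : (⨆ n, Γ n : Submodule R (C × (C →₀ R))) →ₗ[R] C :=
    LinearMap.fst R C (C →₀ R) ∘ₗ (⨆ n, Γ n).subtype
  have hπi : Function.Injective π := by
    rw [injective_iff_map_eq_zero]
    rintro ⟨z, hz⟩ hz0
    obtain ⟨n, y, rfl⟩ := hmem.1 hz
    have hy : h n y = 0 := hz0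
    have hy' : s n y = 0 := by rw [hs, LinearMap.comp_apply, hker n y hy, map_zero]
    ext1
    exact Prod.ext hy hy'
  have hπs : Function.Surjective π := by
    rw [← LinearMap.range_eq_top, ← top_le_iff, ← hc, Submodule.span_le]
    rintro _ ⟨n, rfl⟩
    obtain ⟨y, hy⟩ := hch n
    exact ⟨⟨_, hmem.2 ⟨n + 1, y, rfl⟩⟩, hy⟩
  let e := LinearEquiv.ofBijective π ⟨hπi, hπs⟩
  refine Module.Projective.of_split
    (LinearMap.snd R C (C →₀ R) ∘ₗ (⨆ n, Γ n).subtype ∘ₗ e.symm.toLinearMap) p ?_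
  refine LinearMap.ext fun x => ?_
  obtain ⟨⟨z, hz⟩, rfl⟩ := e.surjective x
  obtain ⟨n, y, rfl⟩ := hmem.1 hz
  simp only [LinearMap.comp_apply, LinearEquiv.coe_coe, LinearEquiv.symm_apply_apply]
  exact LinearMap.congr_fun (hps n) y

/-! ### Adapted submodules and dévissage -/

/-- A submodule `N` of `M` is adapted to `s : M → R_f^(M)` if `s` maps `N` into the span of the basis
vectors indexed by elements of `N`. -/
def IsAdapted {f : R} {M : Type v} [AddCommGroup M] [Module R M]
    (s : M →ₗ[R] (M →₀ Localization.Away f)) (N : Submodule R M) : Prop :=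
  ∀ x ∈ N, ((s x).support : Set M) ⊆ N

/-- An `f`-local section of `M` induces one on `N' / N` for adapted submodules `N` and `N'`: the basis
vector of `y ∈ N'` goes to that of its class, except that basis vectors of elements of `N` go
to `0`, so that `s` kills `N`. -/
lemma IsAwaySection.exists_quotient {f : R} {M : Type v} [AddCommGroup M] [Module R M]
    {s : M →ₗ[R] (M →₀ Localization.Away f)} (hs : IsAwaySection f s) {N N' : Submodule R M}
    (hN : IsAdapted s N) (hN' : IsAdapted s N') :
    ∃ t : (N' ⧸ N.submoduleOf N') →ₗ[R] ((N' ⧸ N.submoduleOf N') →₀ Localization.Away f),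
      IsAwaySection f t := by
  classical
  let q := (N.submoduleOf N').mkQ
  let T : (M →₀ Localization.Away f) →ₗ[Localization.Away f]
      ((N' ⧸ N.submoduleOf N') →₀ Localization.Away f) :=
    linearCombination _ fun y => if h : y ∈ N' ∧ y ∉ N then single (q ⟨y, h.1⟩) 1 else 0
  -- the identity is checked in `(M / N)_f`, into which `(N' / N)_f` embeds by exactness
  let ι : (N' ⧸ N.submoduleOf N') →ₗ[R] M ⧸ N :=
    (N.submoduleOf N').mapQ N N'.subtype le_rfl
  have hι : Function.Injective ι := by
    rw [← LinearMap.ker_eq_bot, Submodule.eq_bot_iff]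
    intro x hx
    obtain ⟨y, rfl⟩ := Submodule.mkQ_surjective _ x
    have : N.mkQ (y : M) = 0 := hx
    rw [Submodule.mkQ_apply, Submodule.Quotient.mk_eq_zero] at this ⊢
    exact this
  let ιf := LocalizedModule.map (Submonoid.powers f) ι
  let qf := LocalizedModule.map (Submonoid.powers f) N.mkQ
  have hT (z : M →₀ Localization.Away f) (hz : (z.support : Set M) ⊆ N') :
      ιf (awayCover f _ (T z)) = qf (awayCover f M z) := by
    have hz' : awayCover f M z = ∑ y ∈ z.support,
        z y • LocalizedModule.mkLinearMap (Submonoid.powers f) M y :=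
      linearCombination_apply _ _
    simp only [hz', T, linearCombination_apply, Finsupp.sum, map_sum, map_smul]
    refine Finset.sum_congr rfl fun y hy => congrArg _ ?_
    have hy' : y ∈ N' := hz hy
    by_cases hyN : y ∈ N
    · have : N.mkQ y = 0 := (Submodule.Quotient.mk_eq_zero N).2 hyN
      rw [dif_neg (fun h => h.2 hyN), map_zero, map_zero, LocalizedModule.mkLinearMap_apply,
        LocalizedModule.map_mk, this, LocalizedModule.zero_mk]
    · rw [dif_pos ⟨hy', hyN⟩, awayCover, linearCombination_single, one_smul,
        LocalizedModule.mkLinearMap_apply, LocalizedModule.mkLinearMap_apply,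
        LocalizedModule.map_mk, LocalizedModule.map_mk]
      rfl
  refine ⟨(N.submoduleOf N').liftQ (T.restrictScalars R ∘ₗ s ∘ₗ N'.subtype) ?_, fun x => ?_⟩
  · intro y hy
    have hy : (y : M) ∈ N := hy
    change T (s y) = 0
    rw [linearCombination_apply]
    refine Finset.sum_eq_zero fun z hz => ?_
    have : z ∈ N := hN _ hy hz
    simp [this]
  · obtain ⟨y, rfl⟩ := Submodule.mkQ_surjective _ x
    refine LocalizedModule.map_injective (Submonoid.powers f) ι hι ?_
    refine (hT (s y) (hN' _ y.2)).trans ?_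
    rw [hs]
    rw [LocalizedModule.mkLinearMap_apply, LocalizedModule.mkLinearMap_apply,
      LocalizedModule.map_mk, LocalizedModule.map_mk]
    rfl

lemma exists_countable_closure {M : Type v} {m : ℕ} (σ : Fin m → M → Finset M) (x : M) :
    ∃ c : ℕ → M, x ∈ Set.range c ∧
      ∀ j, ∀ y ∈ Set.range c, (σ j y : Set M) ⊆ Set.range c := by
  classical
  let X : ℕ → Finset M := fun n =>
    Nat.rec (motive := fun _ => Finset M) {x} (fun _ Y =>
      Y.biUnion fun y => Finset.univ.biUnion fun j => σ j y) n
  let Y : Set M := {z | ∃ n, z ∈ X n}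
  have hY : Y.Countable := by
    have : Y = ⋃ n, {z | z ∈ X n} := by ext; simp [Y]
    rw [this]
    exact Set.countable_iUnion fun n => (X n).finite_toSet.countable
  have hx : x ∈ Y := ⟨0, Finset.mem_singleton_self x⟩
  obtain ⟨c, hc⟩ := hY.exists_eq_range ⟨x, hx⟩
  refine ⟨c, hc ▸ hx, fun j y hy z hz => ?_⟩
  rw [← hc] at hy ⊢
  obtain ⟨n, hn⟩ := hy
  refine ⟨n + 1, ?_⟩
  change z ∈ (X n).biUnion fun y => Finset.univ.biUnion fun j => σ j y
  exact Finset.mem_biUnion.2 ⟨y, hn, Finset.mem_biUnion.2 ⟨j, Finset.mem_univ _, hz⟩⟩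

/-- The dévissage step: an adapted submodule can be enlarged by any given element to an adapted
submodule with projective quotient. -/
lemma exists_adapted_step {m : ℕ} {f : Fin m → R} (hf : Ideal.span (Set.range f) = ⊤)
    {M : Type v} [AddCommGroup M] [Module R M]
    {s : ∀ j, M →ₗ[R] (M →₀ Localization.Away (f j))} (hs : ∀ j, IsAwaySection (f j) (s j))
    {N : Submodule R M} (hN : ∀ j, IsAdapted (s j) N) (x : M) :
    ∃ N' : Submodule R M, N ≤ N' ∧ x ∈ N' ∧ (∀ j, IsAdapted (s j) N') ∧
      Module.Projective R (N' ⧸ N.submoduleOf N') := by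
  obtain ⟨c, hx, hc⟩ := exists_countable_closure (fun j y => (s j y).support) x
  let N' : Submodule R M := N ⊔ Submodule.span R (Set.range c)
  have hcN' (i : ℕ) : c i ∈ N' :=
    (le_sup_right : _ ≤ N') (Submodule.subset_span ⟨i, rfl⟩)
  have hN' (j) : IsAdapted (s j) N' := by
    have : N' ≤ ((supported (Localization.Away (f j)) (Localization.Away (f j))
        (N' : Set M)).restrictScalars R).comap (s j) := by
      refine sup_le (fun y hy => ?_) (Submodule.span_le.2 fun y hy => ?_)
      · exact (hN j y hy).trans (le_sup_left : N ≤ N')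
      · exact (hc j y hy).trans (by rintro _ ⟨i, rfl⟩; exact hcN' i)
    exact this
  refine ⟨N', le_sup_left, ?_, hN', ?_⟩
  · obtain ⟨i, rfl⟩ := hx
    exact hcN' i
  choose t ht using fun j => (hs j).exists_quotient (hN j) (hN' j)
  have hflat : Module.Flat R (N' ⧸ N.submoduleOf N') := by
    refine Module.flat_of_localized_span R _ (Set.range f) hf ?_
    rintro ⟨_, j, rfl⟩
    have := (ht j).projective
    have : Module.Flat (Localization.Away (f j))
      (LocalizedModule (Submonoid.powers (f j)) (N' ⧸ N.submoduleOf N')) := inferInstance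
    exact (Module.flat_iff_of_isLocalization (Localization.Away (f j))
      (Submonoid.powers (f j)) _).1 this
  refine projective_of_countable_s8 (fun n h c => exists_dominating hf ht h c)
    (fun i => (N.submoduleOf N').mkQ ⟨c i, hcN' i⟩) ?_
  rw [← top_le_iff]
  rintro z -
  obtain ⟨⟨y, hy⟩, rfl⟩ := Submodule.mkQ_surjective _ z
  obtain ⟨a, ha, b, hb, rfl⟩ := Submodule.mem_sup.1 hy
  have hbN' : b ∈ N' := (le_sup_right : _ ≤ N') hb
  have hz : (N.submoduleOf N').mkQ ⟨a + b, hy⟩ = (N.submoduleOf N').mkQ ⟨b, hbN'⟩ := by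
    refine (Submodule.Quotient.eq _).2 ?_
    change a + b - b ∈ N
    simpa using ha
  rw [hz]
  clear hz hy
  induction hb using Submodule.span_induction with
  | mem y hy =>
    obtain ⟨i, rfl⟩ := hy
    exact Submodule.subset_span ⟨i, rfl⟩
  | zero => exact zero_mem _
  | add y z hy hz ihy ihz =>
    exact add_mem (ihy ((le_sup_right : _ ≤ N') hy)) (ihz ((le_sup_right : _ ≤ N') hz))
  | smul r y hy ihy => exact Submodule.smul_mem _ r (ihy ((le_sup_right : _ ≤ N') hy))

/-- A section of `p` over `N` extends to `N'` if `N' / N` is projective, since then `N` is a direct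
summand of `N'` and the complement can be lifted separately. -/
lemma exists_extend_section {M F : Type*} [AddCommGroup M] [Module R M] [AddCommGroup F]
    [Module R F] {p : F →ₗ[R] M} (hp : Function.Surjective p) {N N' : Submodule R M} (hle : N ≤ N')
    [Module.Projective R (N' ⧸ N.submoduleOf N')] (g : N →ₗ[R] F) (hg : ∀ x, p (g x) = x) :
    ∃ g' : N' →ₗ[R] F, (∀ x, p (g' x) = x) ∧ ∀ x : N, g' ⟨x, hle x.2⟩ = g x := by
  let q := (N.submoduleOf N').mkQ
  obtain ⟨σ, hσ⟩ := Module.projective_lifting_property q LinearMap.id (Submodule.mkQ_surjective _)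
  obtain ⟨τ, hτ⟩ := Module.projective_lifting_property p (N'.subtype ∘ₗ σ) hp
  let d : N' →ₗ[R] N := (N'.subtype ∘ₗ (LinearMap.id - σ ∘ₗ q)).codRestrict N fun x => by
    have : x - σ (q x) ∈ N.submoduleOf N' := by
      refine (Submodule.Quotient.mk_eq_zero _).1 ?_
      change q (x - σ (q x)) = 0
      rw [map_sub, sub_eq_zero]
      exact (LinearMap.congr_fun hσ (q x)).symm
    exact this
  refine ⟨g ∘ₗ d + τ ∘ₗ q, fun x => ?_, fun x => ?_⟩
  · have h1 : p (τ (q x)) = (σ (q x) : M) := LinearMap.congr_fun hτ (q x)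
    have h2 : (d x : M) = x - σ (q x) := rfl
    simp [hg, h1, h2]
  · have h1 : q ⟨x, hle x.2⟩ = 0 := (Submodule.Quotient.mk_eq_zero _).2 x.2
    have h2 : d ⟨x, hle x.2⟩ = x := by
      ext1
      change ((⟨x, hle x.2⟩ - σ (q ⟨x, hle x.2⟩) : N') : M) = x
      rw [h1, map_zero, sub_zero]
    simp [h1, h2]

end

/-! ### Zariski descent of projectivity -/

/-- Projectivity of modules is a Zariski-local property. -/
theorem stmt8 {R : Type u} [CommRing R] {m : ℕ} (f : Fin m → R)
    (hf : Ideal.span (Set.range f) = ⊤)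
    {M : Type v} [AddCommGroup M] [Module R M]
    (h : ∀ j, Module.Projective (Localization.Away (f j))
      (LocalizedModule (Submonoid.powers (f j)) M)) :
    Module.Projective R M := by
  choose s hs using fun j => exists_isAwaySection (f j) M
  let p : (M →₀ R) →ₗ[R] M := Finsupp.linearCombination R id
  have hp : Function.Surjective p := Finsupp.linearCombination_id_surjective R M
  -- sections of `p` defined over adapted submodules, ordered by extension
  let P : Set (M →ₗ.[R] (M →₀ R)) :=
    {g | (∀ j, IsAdapted (s j) g.domain) ∧ ∀ x, p (g x) = x}
  obtain ⟨g, -, hg⟩ := zorn_le_nonempty₀ P (fun c hcP hc y hy => by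
    refine ⟨LinearPMap.sSup c hc.directedOn, ⟨fun j x hx => ?_, fun ⟨x, hx⟩ => ?_⟩,
      fun z hz => LinearPMap.le_sSup _ hz⟩
    · obtain ⟨z, hz, hxz⟩ := (LinearPMap.mem_domain_sSup_iff ⟨y, hy⟩ hc.directedOn).1 hx
      exact ((hcP hz).1 j x hxz).trans (LinearPMap.le_sSup hc.directedOn hz).1
    · obtain ⟨z, hz, hxz⟩ := (LinearPMap.mem_domain_sSup_iff ⟨y, hy⟩ hc.directedOn).1 hx
      have := (LinearPMap.le_sSup hc.directedOn hz).2 (x := ⟨x, hxz⟩) (y := ⟨x, hx⟩) rfl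
      rw [← this]
      exact (hcP hz).2 _) ⊥ ⟨fun j x hx => by
        have hx : x = 0 := hx
        simp [hx], fun ⟨x, hx⟩ => by
        have hx : x = 0 := hx
        subst hx
        have : (⟨0, hx⟩ : (⊥ : M →ₗ.[R] (M →₀ R)).domain) = 0 := rfl
        simp [this]⟩
  have htop : g.domain = ⊤ := by
    rw [← top_le_iff]
    intro x _
    obtain ⟨N', hle, hx, hN', hproj⟩ := exists_adapted_step hf hs hg.prop.1 x
    obtain ⟨g', hg', hext⟩ := exists_extend_section hp hle g.toFun hg.prop.2
    have hmax : (⟨N', g'⟩ : M →ₗ.[R] (M →₀ R)) ≤ g :=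
      hg.2 ⟨hN', hg'⟩ ⟨hle, fun a b hab => by
        have : b = ⟨a, hle a.2⟩ := Subtype.ext hab.symm
        rw [this]
        exact (hext a).symm⟩
    exact hmax.1 hx
  refine Module.Projective.of_split
    (g.toFun ∘ₗ (LinearMap.id.codRestrict g.domain fun x => htop ▸ Submodule.mem_top)) p ?_
  exact LinearMap.ext fun x => hg.prop.2 ⟨x, _⟩
end

section
/- Let R be a commutative ring, let f_1, …, f_m ∈ R be elements generating the unit ideal, and let M be an R-module. If for each j the localization M_{f_j} is a flat Mittag-Leffler R_{f_j}-module, then M is a flat Mittag-Leffler R-module. -/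
/-!
The Mittag-Leffler part rests on the observation that, for a family `N i` of `R`-modules, the
canonical map `∏ᵢ Nᵢ → ∏ⱼ ∏ᵢ (Nᵢ)_{f j}` is injective because the `f j` generate the unit ideal.
(The maps `(∏ᵢ Nᵢ)_{f j} → ∏ᵢ (Nᵢ)_{f j}` are not injective in general, so one cannot argue for
each `j` separately.) Flatness of `M`, which is itself a local property, keeps this map injective
after `M ⊗ -`, and the outer product, being finite, commutes with `M ⊗ -`. It remains to see that
an element of `M ⊗ ∏ᵢ Nᵢ` with zero components in all `M ⊗ Nᵢ` dies in `M ⊗ ∏ᵢ (Nᵢ)_{f j}`. This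
module is `M_{f j} ⊗ ∏ᵢ (Nᵢ)_{f j}` over `R_{f j}` (`exists_baseChangeEquiv`), so the
Mittag-Leffler property of `M_{f j}` applies (`eq_zero_of_isMittagLeffler_baseChange`).
-/

universe u v

open TensorProduct

/-- If `g : M → M'` exhibits `M'` as the base change of `M` to `A`, then
`M ⊗[R] T ≃ M' ⊗[A] T` for every `A`-module `T`. -/
theorem exists_baseChangeEquiv {R A M M' T : Type*} [CommRing R] [CommRing A] [Algebra R A]
    [AddCommGroup M] [Module R M] [AddCommGroup M'] [Module R M'] [Module A M']
    [IsScalarTower R A M'] [AddCommGroup T] [Module R T] [Module A T] [IsScalarTower R A T]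
    {g : M →ₗ[R] M'} (hg : IsBaseChange A g) :
    ∃ e : M ⊗[R] T ≃+ M' ⊗[A] T, ∀ m t, e (m ⊗ₜ t) = g m ⊗ₜ t := by
  refine ⟨(TensorProduct.comm R M T).toAddEquiv.trans
    ((AlgebraTensorModule.cancelBaseChange R A A T M).symm.toAddEquiv.trans
      ((TensorProduct.congr (LinearEquiv.refl A T) hg.equiv).toAddEquiv.trans
        (TensorProduct.comm A T M').toAddEquiv)), fun m t ↦ ?_⟩
  simp [IsBaseChange.equiv_tmul]

/-- If the base change `M'` of `M` to `A` is Mittag-Leffler over `A`, then `M` satisfies the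
Mittag-Leffler condition over `R` for families of `A`-modules. -/
theorem eq_zero_of_isMittagLeffler_baseChange {R A M : Type*} {M' : Type v} [CommRing R]
    [CommRing A] [Algebra R A] [AddCommGroup M] [Module R M] [AddCommGroup M'] [Module R M']
    [Module A M'] [IsScalarTower R A M'] {g : M →ₗ[R] M'} (hg : IsBaseChange A g)
    (hM : Module.IsMittagLeffler A M') {ι : Type v} (T : ι → Type v) [∀ i, AddCommGroup (T i)]
    [∀ i, Module R (T i)] [∀ i, Module A (T i)] [∀ i, IsScalarTower R A (T i)]
    (x : M ⊗[R] (∀ i, T i))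
    (hx : ∀ i, LinearMap.lTensor M (LinearMap.proj (R := R) (φ := T) i) x = 0) : x = 0 := by
  obtain ⟨e, he⟩ := exists_baseChangeEquiv (T := ∀ i, T i) hg
  refine e.injective ((hM ι T _ _ ?_).trans (map_zero e).symm)
  rw [map_zero]
  funext i
  obtain ⟨e', he'⟩ := exists_baseChangeEquiv (T := T i) hg
  have key : ∀ y, LinearMap.lTensor M' (LinearMap.proj (R := A) (φ := T) i) (e y) =
      e' (LinearMap.lTensor M (LinearMap.proj (R := R) (φ := T) i) y) := by
    intro y
    induction y with
    | zero => simp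
    | tmul m t => simp [he, he']
    | add a b ha hb => simp only [map_add, ha, hb]
  simpa [hx i] using key x

/-- The flat Mittag-Leffler property of modules is Zariski-local. -/
theorem stmt9 {R : Type u} [CommRing R] {m : ℕ} (f : Fin m → R)
    (hf : Ideal.span (Set.range f) = ⊤)
    {M : Type v} [AddCommGroup M] [Module R M]
    (h : ∀ j, Module.Flat (Localization.Away (f j))
        (LocalizedModule (Submonoid.powers (f j)) M) ∧
      Module.IsMittagLeffler (Localization.Away (f j))
        (LocalizedModule (Submonoid.powers (f j)) M)) :
    Module.Flat R M ∧ Module.IsMittagLeffler R M := by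
  have hflat : Module.Flat R M := by
    refine Module.flat_of_localized_span R M (Set.range f) hf ?_
    rintro ⟨_, j, rfl⟩
    have := (h j).1
    have : Module.Flat R (Localization.Away (f j)) :=
      IsLocalization.flat _ (Submonoid.powers (f j))
    exact Module.Flat.trans R (Localization.Away (f j)) _
  refine ⟨hflat, fun ι N _ _ ↦ ?_⟩
  rw [← LinearMap.ker_eq_bot, LinearMap.ker_eq_bot']
  intro x hx
  -- `ι` is lifted to the universe in which the Mittag-Leffler hypothesis is formulated.
  let T (j : Fin m) (i : ULift.{u} ι) : Type (max u v) :=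
    LocalizedModule (Submonoid.powers (f j)) (N i.down)
  let φ (j : Fin m) : (∀ i, N i) →ₗ[R] ∀ i, T j i :=
    LinearMap.pi fun i ↦
      (LocalizedModule.mkLinearMap (Submonoid.powers (f j)) (N i.down)).comp
        (LinearMap.proj i.down)
  have hinj : Function.Injective (LinearMap.pi φ) := by
    rw [← LinearMap.ker_eq_bot, LinearMap.ker_eq_bot']
    intro q hq
    funext i
    refine Module.eq_zero_of_isLocalized_span _ hf
      (fun r ↦ LocalizedModule (Submonoid.powers r.1) (N i))
      (fun r ↦ LocalizedModule.mkLinearMap _ _) _ ?_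
    rintro ⟨_, j, rfl⟩
    exact congrFun (congrFun hq j) ⟨i⟩
  refine Module.Flat.lTensor_preserves_injective_linearMap (M := M) (LinearMap.pi φ) hinj ?_
  rw [map_zero]
  apply (TensorProduct.piRight R R M fun j ↦ ∀ i, T j i).injective
  rw [map_zero]
  funext j
  have hcomp : TensorProduct.piRight R R M (fun j ↦ ∀ i, T j i)
      (LinearMap.lTensor M (LinearMap.pi φ) x) j = LinearMap.lTensor M (φ j) x := by
    clear hx
    induction x with
    | zero => simp
    | tmul a b => rfl
    | add a b ha hb => simp only [map_add, Pi.add_apply, ha, hb]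
  rw [hcomp]
  refine eq_zero_of_isMittagLeffler_baseChange
    (IsLocalizedModule.isBaseChange (Submonoid.powers (f j)) (Localization.Away (f j))
      (LocalizedModule.mkLinearMap (Submonoid.powers (f j)) M)) (h j).2 (T j) _ fun i ↦ ?_
  have hi : LinearMap.lTensor M (LinearMap.proj (R := R) (φ := N) i.down) x = 0 :=
    congrFun hx i.down
  rw [← LinearMap.comp_apply, ← LinearMap.lTensor_comp]
  change LinearMap.lTensor M
    ((LocalizedModule.mkLinearMap (Submonoid.powers (f j)) (N i.down)).comp
      (LinearMap.proj i.down)) x = 0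
  rw [LinearMap.lTensor_comp, LinearMap.comp_apply, hi, map_zero]
end

section
/- Let R be a commutative ring, T ⊆ R a multiplicative submonoid, and S the localization of R at T. Let M be an R-module, N an S-module, and f : M → N an R-linear map such that the induced S-linear map S ⊗_R M → N, s ⊗ m ↦ s·f(m), is bijective. Then for any countable subsets X ⊆ M and Y ⊆ N there exist a countably generated R-submodule M' ⊆ M with X ⊆ M' and a countably generated S-submodule N' ⊆ N with Y ⊆ N' and f(M') ⊆ N', such that N' is the S-submodule generated by f(M') and the induced map S ⊗_R M' → N' is bijective. -/
/-!
Since `S` is a localization at `T`, base change along `R → S` is the same as localization of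
modules at `T`. Every `y ∈ N` therefore has the form `m / t` with `m ∈ M`, `t ∈ T`. Let `M'` be
generated by `X` together with one numerator for each `y ∈ Y`, and let `N'` be the localization of
`M'` inside `N`, which is the `S`-span of `f(M')`. Then `Y ⊆ N'`, and the restriction `M' → N'` is
again a localization at `T` (`Submodule.isLocalizedModule`, where flatness of localization enters),
hence a base change.
-/

universe u v w x

theorem countablyGenerated_span {R : Type u} {M : Type v} [Semiring R] [AddCommMonoid M]
    [Module R M] {s : Set M} (hs : s.Countable) :
    Module.CountablyGenerated' R (Submodule.span R s) :=
  ⟨(↑) ⁻¹' s, hs.preimage Subtype.val_injective, Submodule.span_span_coe_preimage⟩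

/-- Countable subsets of a quasi-coherent pair `(M, N)` over a localization `R → S` are
contained in a countably generated quasi-coherent subpair `(M', N')`. -/
theorem stmt11 {R : Type u} [CommRing R] (T : Submonoid R)
    (S : Type v) [CommRing S] [Algebra R S] [IsLocalization T S]
    {M : Type w} [AddCommGroup M] [Module R M]
    {N : Type x} [AddCommGroup N] [Module R N] [Module S N] [IsScalarTower R S N]
    (f : M →ₗ[R] N) (hf : IsBaseChange S f)
    (X : Set M) (hX : X.Countable) (Y : Set N) (hY : Y.Countable) :
    ∃ (M' : Submodule R M) (N' : Submodule S N),
      X ⊆ (M' : Set M) ∧ Y ⊆ (N' : Set N) ∧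
      Module.CountablyGenerated' R M' ∧ Module.CountablyGenerated' S N' ∧
      N' = Submodule.span S (f '' (M' : Set M)) ∧
      ∃ (hsub : ∀ x ∈ M', f x ∈ N'),
        IsBaseChange S ((f.domRestrict M').codRestrict (N'.restrictScalars R)
          (fun x => hsub x.1 x.2)) := by
  have : IsLocalizedModule T f := (isLocalizedModule_iff_isBaseChange T S f).mpr hf
  choose g hg using IsLocalizedModule.mk'_surjective T f
  let Z : Set M := X ∪ (fun y ↦ (g y).1) '' Y
  have hZ : Z.Countable := hX.union (hY.image _)
  let M' := Submodule.span R Z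
  have hN' : M'.localized' S T f = Submodule.span S (f '' Z) := Submodule.localized'_span S T f Z
  refine ⟨M', M'.localized' S T f, Set.subset_union_left.trans Submodule.subset_span, ?_,
    countablyGenerated_span hZ, ?_, Submodule.localized'_eq_span S T f M', ?_, ?_⟩
  · intro y hy
    exact ⟨(g y).1, Submodule.subset_span (Or.inr ⟨y, hy, rfl⟩), (g y).2, hg y⟩
  · rw [hN']
    exact countablyGenerated_span (hZ.image f)
  · exact fun x hx ↦ (M'.toLocalized' S T f ⟨x, hx⟩).2
  · exact (isLocalizedModule_iff_isBaseChange T S _).mp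
      (Submodule.isLocalizedModule S T f M')
end
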